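/- arXiv:1411.5244 — 2 statements merged into one kernel-verified Lean document; each statement's English description precedes it below -/
import Mathlib

section
/- Any two limit profiles ψ and ψ̃ differ by a multiplicative constant: there exists c ∈ ℂ such that ψ̃ = c·ψ on ℝ²₊. -/
/-!
A limit profile is determined by its behaviour at infinity. Outside the unit disk the potential
`A_e` is a gradient, so that the gauge factor `exp(-i arg(z - 1)/2)` turns a solution `u` into a
harmonic function; the conformal map `s + it ↦ -i e^{s+it}` transports the latter to a function
`pull u 1` on the half-strip `s > 0`, `0 < t < π`, with zero data on the horizontal sides. Its sine
coefficients are `A_m e^{ms} + B_m e^{-ms}` (`fcoef_eq`), where `A_m` (`coefA`) depends linearly on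
`u`.

The energy in the half-disk of radius `e^s` is at least `(2/π) ∑ m |A_m|² (e^{2ms} - e^{2m})`
(`energy_lower`, from Green's identity), whereas `H` equals `(2/π) ∑ |A_m e^{ms} + B_m e^{-ms}|²` by
Parseval's identity. As the quotient tends to `1`, all `A_m` with `m ≥ 2` vanish
(`growing_modes_vanish`).

A solution with all `A_m = 0` is `O(1/|z|)` at infinity (`decay`). It then vanishes identically
(`eq_zero_of_decay`): the diamagnetic identity `Δ|u|² = 2|(i∇+A_e)u|² ≥ 0` gives a maximum principle
for `|u|²`, and the pole is harmless since `u` is bounded near it while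
`|z - 1|² + log |z - 1|²` is subharmonic and tends to `-∞` there. Consequently `A_1 ≠ 0` for every
limit profile, and the difference `ψt - c ψ` with `c = A_1(ψt)/A_1(ψ)` has no growing mode left, so
it is zero.

The solution is only assumed continuous up to the axis `{x₁ = 0}`. Green's identity is therefore
applied to the contracted functions `pull u lam` with `lam < 1`, which are `C²` on closed
rectangles, and `lam → 1` in the result.
-/

open MeasureTheory Real Filter Set Asymptotics

noncomputable section

/-- The open half-disk `D_r⁺(c)`: points at distance `< r` from `c` with positive
first coordinate (we identify `ℝ²` with `ℂ`). -/
def halfDisk (c : ℂ) (r : ℝ) : Set ℂ := {x : ℂ | dist x c < r ∧ 0 < x.re}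

/-- Projection onto the axis `{x₁ = 0}`: `π(a) = (0, a₂)`. -/
def proj (a : ℂ) : ℂ := (a.im : ℂ) * Complex.I

/-- First partial derivative of a complex-valued function on `ℝ² = ℂ`. -/
def pd1 (u : ℂ → ℂ) (x : ℂ) : ℂ := fderiv ℝ u x 1

/-- Second partial derivative of a complex-valued function on `ℝ² = ℂ`. -/
def pd2 (u : ℂ → ℂ) (x : ℂ) : ℂ := fderiv ℝ u x Complex.I

/-- The Aharonov–Bohm potential `A_a(x)`, encoded as the complex number whose real and
imaginary parts are its two components:
`A_a(x) = (1/2)(−(x₂−a₂)/|x−a|², (x₁−a₁)/|x−a|²) = i(x−a)/(2|x−a|²)`. -/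
def abPot (a x : ℂ) : ℂ := Complex.I * (x - a) / (2 * (‖x - a‖ : ℂ) ^ 2)

/-- First component of `A_a`. -/
def abPot1 (a x : ℂ) : ℝ := (abPot a x).re

/-- Second component of `A_a`. -/
def abPot2 (a x : ℂ) : ℝ := (abPot a x).im

/-- First component of the magnetic gradient `(i∇ + A_a)u`. -/
def mg1 (a : ℂ) (u : ℂ → ℂ) (x : ℂ) : ℂ := Complex.I * pd1 u x + (abPot1 a x : ℂ) * u x

/-- Second component of the magnetic gradient `(i∇ + A_a)u`. -/
def mg2 (a : ℂ) (u : ℂ → ℂ) (x : ℂ) : ℂ := Complex.I * pd2 u x + (abPot2 a x : ℂ) * u x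

/-- `|(i∇+A_a)u|²`. -/
def mgSq (a : ℂ) (u : ℂ → ℂ) (x : ℂ) : ℝ := ‖mg1 a u x‖ ^ 2 + ‖mg2 a u x‖ ^ 2

/-- Arclength integral of `f` over the circular part `∂D_r⁺(c)` of the boundary of a
half-disk centered at a point `c` on the axis `{x₁ = 0}`, parametrized by the angle
`θ ∈ (−π/2, π/2)`. -/
def bdryInt (c : ℂ) (r : ℝ) (f : ℂ → ℝ) : ℝ :=
  ∫ θ in Ioo (-(π / 2)) (π / 2), r * f (circleMap c r θ)

/-- The Laplacian of a complex-valued function. -/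
def lapC (u : ℂ → ℂ) (x : ℂ) : ℂ :=
  fderiv ℝ (fun y => pd1 u y) x 1 + fderiv ℝ (fun y => pd2 u y) x Complex.I

/-- Divergence `∇·A_a`. -/
def divAB (a x : ℂ) : ℝ := fderiv ℝ (abPot1 a) x 1 + fderiv ℝ (abPot2 a) x Complex.I

/-- The magnetic Laplacian `(i∇+A_a)²u = −Δu + i(∇·A_a)u + 2i A_a·∇u + |A_a|²u`. -/
def magLap (a : ℂ) (u : ℂ → ℂ) (x : ℂ) : ℂ :=
  - lapC u x + Complex.I * (divAB a x : ℂ) * u x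
    + 2 * Complex.I * ((abPot1 a x : ℂ) * pd1 u x + (abPot2 a x : ℂ) * pd2 u x)
    + ((abPot1 a x ^ 2 + abPot2 a x ^ 2 : ℝ) : ℂ) * u x

/-- The Almgren energy `E(u,r,c,λ,A_a) = ∫_{D_r⁺(c)} (|(i∇+A_a)u|² − λp|u|²) dx`. -/
def Efun (a : ℂ) (u : ℂ → ℂ) (r : ℝ) (c : ℂ) (lam : ℝ) (p : ℂ → ℝ) : ℝ :=
  ∫ x in halfDisk c r, (mgSq a u x - lam * p x * ‖u x‖ ^ 2)

/-- `H(u,r,c) = (1/r)∫_{∂D_r⁺(c)} |u|² dσ`. -/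
def Hfun (u : ℂ → ℂ) (r : ℝ) (c : ℂ) : ℝ := (1 / r) * bdryInt c r fun x => ‖u x‖ ^ 2

/-- The Almgren frequency `N = E/H`. -/
def Nfun (a : ℂ) (u : ℂ → ℂ) (r : ℝ) (c : ℂ) (lam : ℝ) (p : ℂ → ℝ) : ℝ :=
  Efun a u r c lam p / Hfun u r c

/-- A limit profile: continuous on the closed half-plane, `C²` away from the pole
`e = (1,0)`, not identically zero, vanishing on `{x₁ = 0}`, with locally finite
magnetic energy, satisfying `(i∇+A_e)²ψ = 0` on `ℝ²₊∖{e}` together with the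
normalization `lim_{r→∞} r·(∫_{D_r⁺(0)}|(i∇+A_e)ψ|²dx)/(∫_{∂D_r⁺(0)}|ψ|²dσ) = 1`. -/
def IsLimitProfile (ψ : ℂ → ℂ) : Prop :=
  ContinuousOn ψ (closure {x : ℂ | 0 < x.re}) ∧
  ContDiffOn ℝ 2 ψ ({x : ℂ | 0 < x.re} \ {1}) ∧
  (∃ x : ℂ, 0 < x.re ∧ ψ x ≠ 0) ∧
  (∀ x : ℂ, x.re = 0 → ψ x = 0) ∧
  (∀ R > (0 : ℝ), IntegrableOn (mgSq 1 ψ) (halfDisk 0 R)) ∧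
  (∀ x ∈ ({x : ℂ | 0 < x.re} \ {1} : Set ℂ), magLap 1 ψ x = 0) ∧
  Tendsto (fun r : ℝ => r * (∫ x in halfDisk 0 r, mgSq 1 ψ x) /
      bdryInt 0 r fun x => ‖ψ x‖ ^ 2) atTop (nhds 1)

/-! ### Partial derivatives of `C²` functions -/

theorem contDiffOn_pd1 {u : ℂ → ℂ} {U : Set ℂ} (hU : IsOpen U) (hu : ContDiffOn ℝ 2 u U) :
    ContDiffOn ℝ 1 (pd1 u) U :=
  (hu.fderiv_of_isOpen hU (by norm_num)).clm_apply contDiffOn_const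

theorem contDiffOn_pd2 {u : ℂ → ℂ} {U : Set ℂ} (hU : IsOpen U) (hu : ContDiffOn ℝ 2 u U) :
    ContDiffOn ℝ 1 (pd2 u) U :=
  (hu.fderiv_of_isOpen hU (by norm_num)).clm_apply contDiffOn_const

theorem differentiableAt_of_c2 {u : ℂ → ℂ} {U : Set ℂ} (hU : IsOpen U) (hu : ContDiffOn ℝ 2 u U)
    {x : ℂ} (hx : x ∈ U) : DifferentiableAt ℝ u x :=
  (hu.contDiffAt (hU.mem_nhds hx)).differentiableAt (by norm_num)

theorem differentiableAt_pd1 {u : ℂ → ℂ} {U : Set ℂ} (hU : IsOpen U) (hu : ContDiffOn ℝ 2 u U)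
    {x : ℂ} (hx : x ∈ U) : DifferentiableAt ℝ (pd1 u) x :=
  ((contDiffOn_pd1 hU hu).contDiffAt (hU.mem_nhds hx)).differentiableAt (by norm_num)

theorem differentiableAt_pd2 {u : ℂ → ℂ} {U : Set ℂ} (hU : IsOpen U) (hu : ContDiffOn ℝ 2 u U)
    {x : ℂ} (hx : x ∈ U) : DifferentiableAt ℝ (pd2 u) x :=
  ((contDiffOn_pd2 hU hu).contDiffAt (hU.mem_nhds hx)).differentiableAt (by norm_num)

/-! ### Gauging away the potential outside the unit disk -/

/-- The part of the right half-plane outside the closed unit disk, a simply connected region not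
encircling the pole. -/
def outer : Set ℂ := {z : ℂ | 0 < z.re ∧ 1 < ‖z‖}

theorem isOpen_outer : IsOpen outer :=
  (isOpen_lt continuous_const Complex.continuous_re).inter
    (isOpen_lt continuous_const continuous_norm)

theorem sub_one_mem_slitPlane {z : ℂ} (h0 : 0 ≤ z.re) (h1 : 1 < ‖z‖) :
    z - 1 ∈ Complex.slitPlane := by
  rw [Complex.mem_slitPlane_iff]
  by_cases h : z.im = 0
  · left
    have : z = (z.re : ℂ) := by apply Complex.ext <;> simp [h]
    rw [this, Complex.norm_real, Real.norm_eq_abs, abs_of_nonneg h0] at h1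
    simpa using h1
  · right; simpa using h

theorem ne_one_of_outer {z : ℂ} (hz : z ∈ outer) : z ≠ 1 := by
  rintro rfl
  simpa using hz.2

/-- The gauge factor `exp(-iΘ/2)`, where `Θ = arg (z - 1)` is the angle around the pole. -/
def phase (z : ℂ) : ℂ := Complex.exp (-(Complex.I / 2) * ((Complex.log (z - 1)).im : ℂ))

theorem norm_phase (z : ℂ) : ‖phase z‖ = 1 := by
  have : -(Complex.I / 2) * ((Complex.log (z - 1)).im : ℂ)
      = ((-(Complex.log (z - 1)).im / 2 : ℝ) : ℂ) * Complex.I := by push_cast; ring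
  rw [phase, this, Complex.norm_exp_ofReal_mul_I]

theorem hasFDerivAt_phase {z : ℂ} (hz : z - 1 ∈ Complex.slitPlane) :
    ∃ L : ℂ →L[ℝ] ℂ, HasFDerivAt phase L z ∧
      ∀ h, L h = phase z * (-(Complex.I / 2) * ((h / (z - 1)).im : ℂ)) := by
  have h1 : HasDerivAt (fun z : ℂ => Complex.log (z - 1)) (1 / (z - 1)) z :=
    ((hasDerivAt_id z).sub_const 1).clog hz
  have h2 := h1.hasFDerivAt.restrictScalars ℝ
  have h3 := (Complex.ofRealCLM.comp Complex.imCLM).hasFDerivAt.comp z h2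
  have h4 := (h3.const_mul (-(Complex.I / 2))).cexp
  refine ⟨_, h4, fun h => ?_⟩
  simp [phase, div_eq_mul_inv]

theorem contDiffAt_phase {z : ℂ} (hz : z - 1 ∈ Complex.slitPlane) : ContDiffAt ℝ 2 phase z := by
  have h1 : ContDiffAt ℝ 2 (fun z : ℂ => Complex.log (z - 1)) z :=
    ((Complex.contDiffAt_log hz).restrict_scalars ℝ).comp z (contDiffAt_id.sub contDiffAt_const)
  have h3 := (Complex.ofRealCLM.comp Complex.imCLM).contDiff.contDiffAt.comp z h1
  exact (contDiffAt_const.mul h3).cexp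

theorem abPot1_eq (z : ℂ) : abPot1 1 z = (1 / (z - 1)).im / 2 := by
  by_cases hz : z - 1 = 0
  · simp [abPot1, abPot, hz]
  have h : ((‖z - 1‖ : ℂ)) ^ 2 = ((Complex.normSq (z - 1) : ℝ) : ℂ) := by
    rw [Complex.normSq_eq_norm_sq]; push_cast; rfl
  have : Complex.normSq (z-1) ≠ 0 := by simpa using hz
  have e : abPot 1 z = ((1 / (2 * Complex.normSq (z-1)) : ℝ) : ℂ) * (Complex.I * (z-1)) := by
    rw [abPot, h]; push_cast; field_simp
  rw [abPot1, e, Complex.re_ofReal_mul, one_div (z - 1), Complex.inv_im]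
  simp
  field_simp

theorem abPot2_eq (z : ℂ) : abPot2 1 z = (Complex.I / (z - 1)).im / 2 := by
  by_cases hz : z - 1 = 0
  · simp [abPot2, abPot, hz]
  have h : ((‖z - 1‖ : ℂ)) ^ 2 = ((Complex.normSq (z - 1) : ℝ) : ℂ) := by
    rw [Complex.normSq_eq_norm_sq]; push_cast; rfl
  have : Complex.normSq (z-1) ≠ 0 := by simpa using hz
  have e : abPot 1 z = ((1 / (2 * Complex.normSq (z-1)) : ℝ) : ℂ) * (Complex.I * (z-1)) := by
    rw [abPot, h]; push_cast; field_simp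
  rw [abPot2, e, Complex.im_ofReal_mul, Complex.div_im]
  simp
  field_simp

theorem contDiffAt_abPot {z : ℂ} (hz : z ≠ 1) :
    ContDiffAt ℝ 2 (abPot1 1) z ∧ ContDiffAt ℝ 2 (abPot2 1) z := by
  have hz' : z - 1 ≠ 0 := sub_ne_zero.2 hz
  have h (c : ℂ) : ContDiffAt ℝ 2 (fun z : ℂ => (c / (z - 1)).im / 2) z := by
    have : ContDiffAt ℝ 2 (fun z : ℂ => c / (z - 1)) z :=
      (contDiffAt_const (c := c)).mul ((contDiffAt_id.sub contDiffAt_const).inv hz')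
    exact (Complex.imCLM.contDiff.contDiffAt.comp z this).div_const 2
  constructor
  · rw [funext abPot1_eq]; exact h 1
  · rw [funext abPot2_eq]; exact h Complex.I

/-- The gauged function `exp(-iΘ/2) u`, which is harmonic where `u` is magnetic-harmonic. -/
def gauged (u : ℂ → ℂ) (z : ℂ) : ℂ := phase z * u z

theorem outer_subset : outer ⊆ {x : ℂ | 0 < x.re} \ {1} :=
  fun _ hz => ⟨hz.1, ne_one_of_outer hz⟩

theorem isOpen_punctured : IsOpen ({x : ℂ | 0 < x.re} \ {1} : Set ℂ) :=
  (isOpen_lt continuous_const Complex.continuous_re).sdiff isClosed_singleton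

theorem contDiffOn_gauged {u : ℂ → ℂ} (hu : ContDiffOn ℝ 2 u ({x : ℂ | 0 < x.re} \ {1})) :
    ContDiffOn ℝ 2 (gauged u) outer := fun _ hz =>
  ((contDiffAt_phase (sub_one_mem_slitPlane hz.1.le hz.2)).mul
    (hu.contDiffAt (isOpen_punctured.mem_nhds (outer_subset hz)))).contDiffWithinAt

theorem fderiv_gauged {u : ℂ → ℂ} (hu : ContDiffOn ℝ 2 u ({x : ℂ | 0 < x.re} \ {1}))
    {z : ℂ} (hz : z ∈ outer) :
    pd1 (gauged u) z = phase z * (pd1 u z - Complex.I * (abPot1 1 z : ℂ) * u z) ∧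
    pd2 (gauged u) z = phase z * (pd2 u z - Complex.I * (abPot2 1 z : ℂ) * u z) := by
  obtain ⟨L, hL, hL'⟩ := hasFDerivAt_phase (sub_one_mem_slitPlane hz.1.le hz.2)
  have hd := (differentiableAt_of_c2 isOpen_punctured hu (outer_subset hz)).hasFDerivAt
  have h : HasFDerivAt (gauged u) _ z := hL.mul hd
  rw [pd1, pd2, h.fderiv, abPot1_eq, abPot2_eq]
  simp only [add_apply, smul_apply, hL', pd1, pd2,
    smul_eq_mul]
  constructor <;> push_cast <;> ring

theorem norm_grad_gauged {u : ℂ → ℂ} (hu : ContDiffOn ℝ 2 u ({x : ℂ | 0 < x.re} \ {1}))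
    {z : ℂ} (hz : z ∈ outer) :
    ‖pd1 (gauged u) z‖ ^ 2 + ‖pd2 (gauged u) z‖ ^ 2 = mgSq 1 u z := by
  obtain ⟨h1, h2⟩ := fderiv_gauged hu hz
  have e1 : mg1 1 u z = Complex.I * (pd1 u z - Complex.I * (abPot1 1 z : ℂ) * u z) := by
    rw [mg1]; linear_combination ((abPot1 1 z : ℂ) * u z) * Complex.I_sq
  have e2 : mg2 1 u z = Complex.I * (pd2 u z - Complex.I * (abPot2 1 z : ℂ) * u z) := by
    rw [mg2]; linear_combination ((abPot2 1 z : ℂ) * u z) * Complex.I_sq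
  rw [h1, h2, mgSq, e1, e2]
  simp only [norm_mul, norm_phase, Complex.norm_I, one_mul]

theorem lapC_gauged {u : ℂ → ℂ} (hu : ContDiffOn ℝ 2 u ({x : ℂ | 0 < x.re} \ {1}))
    (hm : ∀ x ∈ ({x : ℂ | 0 < x.re} \ {1} : Set ℂ), magLap 1 u x = 0)
    {z : ℂ} (hz : z ∈ outer) : lapC (gauged u) z = 0 := by
  obtain ⟨L, hL, hL'⟩ := hasFDerivAt_phase (sub_one_mem_slitPlane hz.1.le hz.2)
  have hz' := outer_subset hz
  have hd := (differentiableAt_of_c2 isOpen_punctured hu hz').hasFDerivAt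
  have hd1 := (differentiableAt_pd1 isOpen_punctured hu hz').hasFDerivAt
  have hd2 := (differentiableAt_pd2 isOpen_punctured hu hz').hasFDerivAt
  obtain ⟨cA1, cA2⟩ := contDiffAt_abPot (ne_one_of_outer hz)
  have hA1 := (cA1.differentiableAt (by norm_num)).hasFDerivAt
  have hA2 := (cA2.differentiableAt (by norm_num)).hasFDerivAt
  have hA1' := Complex.ofRealCLM.hasFDerivAt.comp z hA1
  have hA2' := Complex.ofRealCLM.hasFDerivAt.comp z hA2
  have E1 : pd1 (gauged u) =ᶠ[nhds z]
      fun z => phase z * (pd1 u z - Complex.I * (abPot1 1 z : ℂ) * u z) := by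
    filter_upwards [isOpen_outer.mem_nhds hz] with w hw using (fderiv_gauged hu hw).1
  have E2 : pd2 (gauged u) =ᶠ[nhds z]
      fun z => phase z * (pd2 u z - Complex.I * (abPot2 1 z : ℂ) * u z) := by
    filter_upwards [isOpen_outer.mem_nhds hz] with w hw using (fderiv_gauged hu hw).2
  have D1 := hL.fun_mul (hd1.fun_sub ((hA1'.const_mul Complex.I).fun_mul hd))
  have D2 := hL.fun_mul (hd2.fun_sub ((hA2'.const_mul Complex.I).fun_mul hd))
  have F1 := (E1.symm.hasFDerivAt_iff (f' := _)).1 D1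
  have F2 := (E2.symm.hasFDerivAt_iff (f' := _)).1 D2
  have key := hm z hz'
  rw [lapC]
  erw [F1.fderiv, F2.fderiv]
  simp only [magLap, lapC, divAB] at key
  have a1 : (((1 / (z - 1)).im : ℝ) : ℂ) = 2 * (abPot1 1 z : ℂ) := by
    rw [abPot1_eq]; push_cast; ring
  have a2 : (((Complex.I / (z - 1)).im : ℝ) : ℂ) = 2 * (abPot2 1 z : ℂ) := by
    rw [abPot2_eq]; push_cast; ring
  simp only [add_apply, sub_apply,
    smul_apply, hL', a1, a2, smul_eq_mul, ContinuousLinearMap.comp_apply,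
    Function.comp, Complex.ofRealCLM_apply]
  push_cast at key
  have p1 : fderiv ℝ u z 1 = pd1 u z := rfl
  have p2 : fderiv ℝ u z Complex.I = pd2 u z := rfl
  simp only [p1, p2]
  linear_combination (-phase z) * key + phase z * u z * ((abPot1 1 z : ℂ)^2 + (abPot2 1 z : ℂ)^2) * Complex.I_sq

/-! ### Logarithmic coordinates -/

/-- The conformal map `ζ ↦ -i exp (λζ + i(1-λ)π/2)`. For `λ = 1` it maps the half-strip
`Re ζ > 0`, `0 < Im ζ < π` onto `outer`; for `λ < 1` it maps a neighbourhood of the part of the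
closed half-strip with `Re ζ > 0` into `outer`. -/
def logMap (lam : ℝ) (ζ : ℂ) : ℂ :=
  -Complex.I * Complex.exp (lam * ζ + ((1 - lam) * (π / 2) : ℝ) * Complex.I)

/-- The region mapped by `logMap λ` into `outer`. -/
def stripDom (lam : ℝ) : Set ℂ :=
  {ζ : ℂ | 0 < ζ.re ∧ 0 < lam * ζ.im + (1 - lam) * (π / 2) ∧ lam * ζ.im + (1 - lam) * (π / 2) < π}

/-- A function in the gauge and coordinates in which the magnetic Laplace equation on `outer`
becomes the Laplace equation on a half-strip. -/
def pull (u : ℂ → ℂ) (lam : ℝ) (ζ : ℂ) : ℂ := gauged u (logMap lam ζ)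

theorem isOpen_stripDom (lam : ℝ) : IsOpen (stripDom lam) := by
  have h : Continuous fun ζ : ℂ => lam * ζ.im + (1 - lam) * (π / 2) := by fun_prop
  exact (isOpen_lt continuous_const Complex.continuous_re).inter
    ((isOpen_lt continuous_const h).inter (isOpen_lt h continuous_const))

theorem norm_logMap (lam : ℝ) (ζ : ℂ) : ‖logMap lam ζ‖ = Real.exp (lam * ζ.re) := by
  simp [logMap, Complex.norm_exp]

theorem logMap_re (lam : ℝ) (ζ : ℂ) : (logMap lam ζ).re =
    Real.exp (lam * ζ.re) * Real.sin (lam * ζ.im + (1 - lam) * (π / 2)) := by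
  simp [logMap, Complex.exp_re, Complex.exp_im]

theorem logMap_mem {lam : ℝ} (hl : 0 < lam) {ζ : ℂ} (hζ : ζ ∈ stripDom lam) :
    logMap lam ζ ∈ outer := by
  refine ⟨?_, ?_⟩
  · rw [logMap_re]
    exact mul_pos (Real.exp_pos _) (Real.sin_pos_of_pos_of_lt_pi hζ.2.1 hζ.2.2)
  · rw [norm_logMap]
    exact Real.one_lt_exp_iff.2 (mul_pos hl hζ.1)

theorem hasDerivAt_logMap (lam : ℝ) (ζ : ℂ) :
    HasDerivAt (logMap lam) (lam * logMap lam ζ) ζ := by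
  have h : HasDerivAt (fun ζ : ℂ => (lam : ℂ) * ζ + ((1 - lam) * (π / 2) : ℝ) * Complex.I)
      ((lam : ℂ) * 1) ζ := ((hasDerivAt_id ζ).const_mul (lam : ℂ)).add_const _
  refine (h.cexp.const_mul (-Complex.I)).congr_deriv ?_
  simp only [logMap]; ring

theorem hasFDerivAt_logMap (lam : ℝ) (ζ : ℂ) : ∃ L : ℂ →L[ℝ] ℂ, HasFDerivAt (logMap lam) L ζ ∧
    ∀ h, L h = h * (lam * logMap lam ζ) := by
  refine ⟨_, (hasDerivAt_logMap lam ζ).hasFDerivAt.restrictScalars ℝ, fun h => ?_⟩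
  simp

theorem contDiff_logMap (lam : ℝ) : ContDiff ℝ 2 (logMap lam) := by
  unfold logMap; fun_prop

theorem contDiffOn_pull {u : ℂ → ℂ} (hu : ContDiffOn ℝ 2 u ({x : ℂ | 0 < x.re} \ {1}))
    {lam : ℝ} (hl : 0 < lam) : ContDiffOn ℝ 2 (pull u lam) (stripDom lam) :=
  (contDiffOn_gauged hu).comp (contDiff_logMap lam).contDiffOn fun _ h => logMap_mem hl h

theorem fderiv_pull {u : ℂ → ℂ} (hu : ContDiffOn ℝ 2 u ({x : ℂ | 0 < x.re} \ {1}))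
    {lam : ℝ} (hl : 0 < lam) {ζ : ℂ} (hζ : ζ ∈ stripDom lam) (h : ℂ) :
    fderiv ℝ (pull u lam) ζ h =
      fderiv ℝ (gauged u) (logMap lam ζ) (h * (lam * logMap lam ζ)) := by
  obtain ⟨L, hL, hL'⟩ := hasFDerivAt_logMap lam ζ
  have hd := (differentiableAt_of_c2 isOpen_outer (contDiffOn_gauged hu)
    (logMap_mem hl hζ)).hasFDerivAt
  have : HasFDerivAt (pull u lam) _ ζ := hd.comp ζ hL
  rw [this.fderiv]
  simp [hL']

theorem clm_apply_eq (L : ℂ →L[ℝ] ℂ) (z : ℂ) : L z = z.re * L 1 + z.im * L Complex.I := by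
  have : z = z.re • (1 : ℂ) + z.im • Complex.I := by
    apply Complex.ext <;> simp
  conv_lhs => rw [this]
  rw [map_add, map_smul, map_smul, Complex.real_smul, Complex.real_smul]

theorem norm_grad_pull {u : ℂ → ℂ} (hu : ContDiffOn ℝ 2 u ({x : ℂ | 0 < x.re} \ {1}))
    {lam : ℝ} (hl : 0 < lam) {ζ : ℂ} (hζ : ζ ∈ stripDom lam) :
    ‖pd1 (pull u lam) ζ‖ ^ 2 + ‖pd2 (pull u lam) ζ‖ ^ 2 =
      ‖lam * logMap lam ζ‖ ^ 2 * mgSq 1 u (logMap lam ζ) := by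
  rw [← norm_grad_gauged hu (logMap_mem hl hζ)]
  simp only [pd1, pd2, fderiv_pull hu hl hζ]
  generalize (lam : ℂ) * logMap lam ζ = q
  generalize fderiv ℝ (gauged u) (logMap lam ζ) = L
  rw [clm_apply_eq L (1 * q), clm_apply_eq L (Complex.I * q)]
  simp only [← Complex.normSq_eq_norm_sq, Complex.normSq_apply]
  simp
  ring

theorem lapC_pull {u : ℂ → ℂ} (hu : ContDiffOn ℝ 2 u ({x : ℂ | 0 < x.re} \ {1}))
    (hm : ∀ x ∈ ({x : ℂ | 0 < x.re} \ {1} : Set ℂ), magLap 1 u x = 0)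
    {lam : ℝ} (hl : 0 < lam) {ζ : ℂ} (hζ : ζ ∈ stripDom lam) : lapC (pull u lam) ζ = 0 := by
  have h0 := lapC_gauged hu hm (logMap_mem hl hζ)
  have hw := contDiffOn_gauged hu
  obtain ⟨L, hL, hL'⟩ := hasFDerivAt_logMap lam ζ
  have hB := (((hw.fderiv_of_isOpen (m := 1) isOpen_outer (by norm_num)).contDiffAt
    (isOpen_outer.mem_nhds (logMap_mem hl hζ))).differentiableAt (by norm_num)).hasFDerivAt
  set B := fderiv ℝ (fderiv ℝ (gauged u)) (logMap lam ζ) with hBdef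
  have e (h : ℂ) : fderiv ℝ (fun y => fderiv ℝ (gauged u) y h) (logMap lam ζ) h = B h h := by
    have := (hB.clm_apply (hasFDerivAt_const h (logMap lam ζ))).fderiv
    rw [this]; simp
  have e' (h : ℂ) : fderiv ℝ (fun y => fderiv ℝ (pull u lam) y h) ζ h =
      B (h * (lam * logMap lam ζ)) (h * (lam * logMap lam ζ)) +
      fderiv ℝ (gauged u) (logMap lam ζ) (h * (lam * (h * (lam * logMap lam ζ)))) := by
    have E : (fun y => fderiv ℝ (pull u lam) y h) =ᶠ[nhds ζ]
        fun y => fderiv ℝ (gauged u) (logMap lam y) (h * (lam * logMap lam y)) := by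
      filter_upwards [(isOpen_stripDom lam).mem_nhds hζ] with y hy using fderiv_pull hu hl hy h
    have D := (hB.comp ζ hL).clm_apply ((hL.const_mul (lam : ℂ)).const_mul h)
    rw [E.fderiv_eq]
    erw [D.fderiv]
    simp [hL', add_comm]
  have h1 := e 1
  have h2 := e Complex.I
  have h3 := e' 1
  have h4 := e' Complex.I
  simp only [lapC, pd1, pd2] at h0 ⊢
  rw [h3, h4]
  rw [h1, h2] at h0
  have s : Complex.I * (lam * (Complex.I * (lam * logMap lam ζ))) =
      -(1 * (lam * (1 * (lam * logMap lam ζ)))) := by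
    linear_combination (lam * (lam * logMap lam ζ)) * Complex.I_sq
  rw [s, map_neg]
  generalize (lam : ℂ) * logMap lam ζ = q
  have b (z : ℂ) : B z z = z.re * (z.re * B 1 1 + z.im * B 1 Complex.I)
      + z.im * (z.re * B Complex.I 1 + z.im * B Complex.I Complex.I) := by
    have : B z = z.re • B 1 + z.im • B Complex.I := by
      conv_lhs => rw [show z = z.re • (1 : ℂ) + z.im • Complex.I by apply Complex.ext <;> simp]
      rw [map_add, map_smul, map_smul]
    rw [this]
    simp only [add_apply, smul_apply]
    rw [clm_apply_eq (B 1) z, clm_apply_eq (B Complex.I) z, Complex.real_smul, Complex.real_smul]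
  rw [b (1 * q), b (Complex.I * q)]
  simp
  linear_combination ((q.re : ℂ) ^ 2 + (q.im : ℂ) ^ 2) * h0

theorem pull_eq (u : ℂ → ℂ) (lam : ℝ) (ζ : ℂ) :
    pull u lam ζ = pull u 1 (lam * ζ + ((1 - lam) * (π / 2) : ℝ) * Complex.I) := by
  simp [pull, logMap]

/-- The half-strip with its horizontal sides included. -/
def closedStrip : Set ℂ := {ζ : ℂ | 0 < ζ.re ∧ 0 ≤ ζ.im ∧ ζ.im ≤ π}

theorem continuousOn_pull {u : ℂ → ℂ} (hu : ContinuousOn u (closure {x : ℂ | 0 < x.re})) :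
    ContinuousOn (pull u 1) closedStrip := by
  have hcl : closure {x : ℂ | 0 < x.re} = {x : ℂ | 0 ≤ x.re} := Complex.closure_setOfPred_lt_re 0
  rw [hcl] at hu
  have hre : ∀ ζ ∈ closedStrip, 0 ≤ (logMap 1 ζ).re := fun ζ hζ => by
    rw [logMap_re]
    refine mul_nonneg (Real.exp_pos _).le (Real.sin_nonneg_of_nonneg_of_le_pi ?_ ?_) <;>
      simp [hζ.2.1, hζ.2.2]
  have hc : Continuous (logMap 1) := (contDiff_logMap 1).continuous
  refine ContinuousOn.mul ?_ (hu.comp hc.continuousOn hre)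
  intro ζ hζ
  have : logMap 1 ζ - 1 ∈ Complex.slitPlane := by
    refine sub_one_mem_slitPlane (hre ζ hζ) ?_
    rw [norm_logMap]
    exact Real.one_lt_exp_iff.2 (by simpa using hζ.1)
  exact ((contDiffAt_phase this).continuousAt.comp hc.continuousAt).continuousWithinAt

theorem pull_boundary {u : ℂ → ℂ} (hu : ∀ x : ℂ, x.re = 0 → u x = 0) {ζ : ℂ}
    (h : ζ.im = 0 ∨ ζ.im = π) : pull u 1 ζ = 0 := by
  have : (logMap 1 ζ).re = 0 := by
    rw [logMap_re]; rcases h with h | h <;> simp [h]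
  simp [pull, gauged, hu _ this]

theorem norm_pull (u : ℂ → ℂ) (lam : ℝ) (ζ : ℂ) : ‖pull u lam ζ‖ = ‖u (logMap lam ζ)‖ := by
  simp [pull, gauged, norm_phase]

/-! ### Green's identity on rectangles and separated harmonic functions -/

theorem continuous_mk2 : Continuous fun p : ℝ × ℝ => (⟨p.1, p.2⟩ : ℂ) :=
  Complex.equivRealProdCLM.symm.continuous

theorem continuous_mk_left (t : ℝ) : Continuous fun s : ℝ => (⟨s, t⟩ : ℂ) :=
  continuous_mk2.comp (continuous_id.prodMk continuous_const)

theorem continuous_mk_right (s : ℝ) : Continuous fun t : ℝ => (⟨s, t⟩ : ℂ) :=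
  continuous_mk2.comp (continuous_const.prodMk continuous_id)

/-- The divergence theorem on a rectangle. -/
theorem div_rect {P Q : ℂ → ℂ} {U : Set ℂ} (hU : IsOpen U) (hP : ContDiffOn ℝ 1 P U)
    (hQ : ContDiffOn ℝ 1 Q U) {a b c d : ℝ} (hab : a ≤ b) (hcd : c ≤ d)
    (hR : ∀ s ∈ Icc a b, ∀ t ∈ Icc c d, (⟨s, t⟩ : ℂ) ∈ U) :
    (∫ s in a..b, ∫ t in c..d, (pd1 P ⟨s, t⟩ + pd2 Q ⟨s, t⟩)) =
      ((∫ t in c..d, P ⟨b, t⟩) - ∫ t in c..d, P ⟨a, t⟩) +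
      ((∫ s in a..b, Q ⟨s, d⟩) - ∫ s in a..b, Q ⟨s, c⟩) := by
  let e : ℝ × ℝ →L[ℝ] ℂ := (Complex.equivRealProdCLM.symm : ℝ × ℝ →L[ℝ] ℂ)
  have he : ∀ p : ℝ × ℝ, e p = ⟨p.1, p.2⟩ := fun p => rfl
  have hmaps : MapsTo e (uIcc a b ×ˢ uIcc c d) U := by
    rintro ⟨s, t⟩ ⟨hs, ht⟩
    rw [uIcc_of_le hab] at hs
    rw [uIcc_of_le hcd] at ht
    exact hR s hs t ht
  have hder : ∀ {P : ℂ → ℂ}, ContDiffOn ℝ 1 P U → ∀ x ∈ uIcc a b ×ˢ uIcc c d,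
      HasFDerivAt (fun x => P (e x)) ((fderiv ℝ P (e x)).comp e) x := fun {P} hP x hx =>
    ((hP.contDiffAt (hU.mem_nhds (hmaps hx))).differentiableAt
      (by norm_num)).hasFDerivAt.comp x e.hasFDerivAt
  have hsub : Ioo (min a b) (max a b) ×ˢ Ioo (min c d) (max c d) ⊆ uIcc a b ×ˢ uIcc c d := by
    intro x hx
    exact ⟨⟨hx.1.1.le, hx.1.2.le⟩, ⟨hx.2.1.le, hx.2.2.le⟩⟩
  have hcont : ∀ {P : ℂ → ℂ} (v : ℂ), ContDiffOn ℝ 1 P U →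
      ContinuousOn (fun x => fderiv ℝ P (e x) v) (uIcc a b ×ˢ uIcc c d) := fun {P} v hP =>
    ((hP.continuousOn_fderiv_of_isOpen hU le_rfl).comp e.continuous.continuousOn hmaps).clm_apply
      continuousOn_const
  have e1 : e (1, 0) = 1 := by rw [he]; rfl
  have e2 : e (0, 1) = Complex.I := by rw [he]; rfl
  have := integral2_divergence_prod_of_hasFDerivAt (fun x => P (e x)) (fun x => Q (e x))
    (fun x => (fderiv ℝ P (e x)).comp e) (fun x => (fderiv ℝ Q (e x)).comp e) a c b d
    (hP.continuousOn.comp e.continuous.continuousOn hmaps)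
    (hQ.continuousOn.comp e.continuous.continuousOn hmaps)
    (fun x hx => hder hP x (hsub hx)) (fun x hx => hder hQ x (hsub hx)) ?_
  · simp only [ContinuousLinearMap.comp_apply, e1, e2, he] at this
    simp only [pd1, pd2]
    rw [this]; ring
  · simp only [ContinuousLinearMap.comp_apply, e1, e2]
    exact ((hcont 1 hP).add (hcont Complex.I hQ)).integrableOn_compact
      (isCompact_uIcc.prod isCompact_uIcc)

/-- Green's first identity for a harmonic function `T`. -/
theorem green {W T : ℂ → ℂ} {U : Set ℂ} (hU : IsOpen U) (hW : ContDiffOn ℝ 2 W U)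
    (hT : ContDiffOn ℝ 2 T U) (hlap : ∀ x ∈ U, lapC T x = 0)
    {a b c d : ℝ} (hab : a ≤ b) (hcd : c ≤ d)
    (hR : ∀ s ∈ Icc a b, ∀ t ∈ Icc c d, (⟨s, t⟩ : ℂ) ∈ U) :
    (∫ s in a..b, ∫ t in c..d,
        (pd1 W ⟨s, t⟩ * pd1 T ⟨s, t⟩ + pd2 W ⟨s, t⟩ * pd2 T ⟨s, t⟩)) =
      ((∫ t in c..d, W ⟨b, t⟩ * pd1 T ⟨b, t⟩) - ∫ t in c..d, W ⟨a, t⟩ * pd1 T ⟨a, t⟩) +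
      ((∫ s in a..b, W ⟨s, d⟩ * pd2 T ⟨s, d⟩) - ∫ s in a..b, W ⟨s, c⟩ * pd2 T ⟨s, c⟩) := by
  rw [← div_rect hU (P := fun z => W z * pd1 T z) (Q := fun z => W z * pd2 T z)
    ((hW.of_le (by norm_num)).mul (contDiffOn_pd1 hU hT))
    ((hW.of_le (by norm_num)).mul (contDiffOn_pd2 hU hT)) hab hcd hR]
  refine intervalIntegral.integral_congr fun s hs => intervalIntegral.integral_congr fun t ht => ?_
  rw [uIcc_of_le hab] at hs
  rw [uIcc_of_le hcd] at ht
  have hx := hR s hs t ht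
  have hl : fderiv ℝ (pd1 T) ⟨s, t⟩ 1 + fderiv ℝ (pd2 T) ⟨s, t⟩ Complex.I = 0 := hlap _ hx
  have D := (differentiableAt_of_c2 hU hW hx).hasFDerivAt
  have D1 := D.fun_mul (differentiableAt_pd1 hU hT hx).hasFDerivAt
  have D2 := D.fun_mul (differentiableAt_pd2 hU hT hx).hasFDerivAt
  change _ = fderiv ℝ (fun z => W z * pd1 T z) ⟨s, t⟩ 1 +
    fderiv ℝ (fun z => W z * pd2 T z) ⟨s, t⟩ Complex.I
  rw [D1.fderiv, D2.fderiv]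
  simp only [add_apply, smul_apply, smul_eq_mul]
  change pd1 W _ * _ + pd2 W _ * _ = _ + _ * pd1 W _ + (_ + _ * pd2 W _)
  linear_combination (-W ⟨s, t⟩) * hl

/-- The separated harmonic function `(A e^{ms} + B e^{-ms}) sin (mt)`. -/
def mode (m : ℕ) (A B : ℂ) (ζ : ℂ) : ℂ :=
  (A * (Real.exp (m * ζ.re) : ℝ) + B * (Real.exp (-(m * ζ.re)) : ℝ)) * (Real.sin (m * ζ.im) : ℝ)

theorem hasFDerivAt_sep {g h : ℝ → ℂ} {g' h' : ℂ} {ζ : ℂ} (hg : HasDerivAt g g' ζ.re)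
    (hh : HasDerivAt h h' ζ.im) : ∃ L : ℂ →L[ℝ] ℂ,
      HasFDerivAt (fun ζ : ℂ => g ζ.re * h ζ.im) L ζ ∧ L 1 = g' * h ζ.im ∧
        L Complex.I = g ζ.re * h' := by
  have h1 : HasFDerivAt (fun ζ : ℂ => g ζ.re) _ ζ := hg.hasFDerivAt.comp ζ Complex.reCLM.hasFDerivAt
  have h2 : HasFDerivAt (fun ζ : ℂ => h ζ.im) _ ζ := hh.hasFDerivAt.comp ζ Complex.imCLM.hasFDerivAt
  refine ⟨_, h1.fun_mul h2, ?_, ?_⟩ <;> simp [mul_comm]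

theorem hasDerivAt_expPart (m : ℕ) (A B : ℂ) (x : ℝ) :
    HasDerivAt (fun x : ℝ => A * (Real.exp (m * x) : ℝ) + B * (Real.exp (-(m * x)) : ℝ))
      ((m * A) * (Real.exp (m * x) : ℝ) + (-(m * B)) * (Real.exp (-(m * x)) : ℝ)) x := by
  have h0 : HasDerivAt (fun x : ℝ => (m : ℝ) * x) (m * 1) x := (hasDerivAt_id x).const_mul _
  have h1 := (h0.exp.ofReal_comp).const_mul A
  have h2 := (h0.fun_neg.exp.ofReal_comp).const_mul B
  refine (h1.fun_add h2).congr_deriv ?_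
  push_cast; ring

theorem hasDerivAt_sinPart (m : ℕ) (x : ℝ) :
    HasDerivAt (fun x : ℝ => ((Real.sin (m * x) : ℝ) : ℂ)) (m * (Real.cos (m * x) : ℝ)) x := by
  have h0 : HasDerivAt (fun x : ℝ => (m : ℝ) * x) (m * 1) x := (hasDerivAt_id x).const_mul _
  refine (h0.sin.ofReal_comp).congr_deriv ?_
  push_cast; ring

theorem hasDerivAt_cosPart (m : ℕ) (x : ℝ) :
    HasDerivAt (fun x : ℝ => (m * (Real.cos (m * x) : ℝ) : ℂ))
      (-(m ^ 2 * (Real.sin (m * x) : ℝ))) x := by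
  have h0 : HasDerivAt (fun x : ℝ => (m : ℝ) * x) (m * 1) x := (hasDerivAt_id x).const_mul _
  refine ((h0.cos.ofReal_comp).const_mul (m : ℂ)).congr_deriv ?_
  push_cast; ring

theorem pd1_mode (m : ℕ) (A B ζ : ℂ) : pd1 (mode m A B) ζ = mode m (m * A) (-(m * B)) ζ := by
  obtain ⟨L, hL, h1, -⟩ := hasFDerivAt_sep (hasDerivAt_expPart m A B ζ.re)
    (hasDerivAt_sinPart m ζ.im)
  have : HasFDerivAt (mode m A B) L ζ := hL
  rw [pd1, this.fderiv, h1, mode]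

theorem pd2_mode (m : ℕ) (A B ζ : ℂ) : pd2 (mode m A B) ζ =
    (A * (Real.exp (m * ζ.re) : ℝ) + B * (Real.exp (-(m * ζ.re)) : ℝ)) *
      (m * (Real.cos (m * ζ.im) : ℝ)) := by
  obtain ⟨L, hL, -, h1⟩ := hasFDerivAt_sep (hasDerivAt_expPart m A B ζ.re)
    (hasDerivAt_sinPart m ζ.im)
  have : HasFDerivAt (mode m A B) L ζ := hL
  rw [pd2, this.fderiv, h1]

theorem contDiff_mode (m : ℕ) (A B : ℂ) : ContDiff ℝ 2 (mode m A B) := by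
  have hr : ContDiff ℝ 2 (fun ζ : ℂ => ζ.re) := Complex.reCLM.contDiff
  have hi : ContDiff ℝ 2 (fun ζ : ℂ => ζ.im) := Complex.imCLM.contDiff
  have ho : ∀ {f : ℂ → ℝ}, ContDiff ℝ 2 f → ContDiff ℝ 2 fun ζ => (f ζ : ℂ) := fun h =>
    Complex.ofRealCLM.contDiff.comp h
  unfold mode
  exact ((contDiff_const.mul (ho (contDiff_const.mul hr).exp)).add
    (contDiff_const.mul (ho (contDiff_const.mul hr).neg.exp))).mul (ho (contDiff_const.mul hi).sin)

theorem lapC_mode (m : ℕ) (A B ζ : ℂ) : lapC (mode m A B) ζ = 0 := by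
  obtain ⟨L, hL, -, h1⟩ := hasFDerivAt_sep (hasDerivAt_expPart m A B ζ.re)
    (hasDerivAt_cosPart m ζ.im)
  have e1 : (fun y => pd1 (mode m A B) y) = mode m (m * A) (-(m * B)) :=
    funext fun y => pd1_mode m A B y
  have e2 : (fun y => pd2 (mode m A B) y) = fun ζ : ℂ =>
      (A * (Real.exp (m * ζ.re) : ℝ) + B * (Real.exp (-(m * ζ.re)) : ℝ)) *
      (m * (Real.cos (m * ζ.im) : ℝ)) := funext fun y => pd2_mode m A B y
  rw [lapC, e1, e2, hL.fderiv, h1]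
  change pd1 _ _ + _ = _
  rw [pd1_mode, mode]
  push_cast
  ring

/-- A finite sum of separated harmonic functions. -/
def modeSum (M : ℕ) (A B : ℕ → ℂ) (ζ : ℂ) : ℂ := ∑ m ∈ Finset.range M, mode m (A m) (B m) ζ

theorem contDiff_modeSum (M : ℕ) (A B : ℕ → ℂ) : ContDiff ℝ 2 (modeSum M A B) :=
  ContDiff.sum fun m _ => contDiff_mode m (A m) (B m)

theorem fderiv_modeSum (M : ℕ) (A B : ℕ → ℂ) (ζ : ℂ) : fderiv ℝ (modeSum M A B) ζ =
    ∑ m ∈ Finset.range M, fderiv ℝ (mode m (A m) (B m)) ζ :=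
  fderiv_fun_sum fun m _ => ((contDiff_mode m (A m) (B m)).differentiable (by norm_num)) ζ

theorem pd1_modeSum (M : ℕ) (A B : ℕ → ℂ) (ζ : ℂ) : pd1 (modeSum M A B) ζ =
    ∑ m ∈ Finset.range M, mode m (m * A m) (-(m * B m)) ζ := by
  simp [pd1, fderiv_modeSum, ← pd1_mode]

theorem pd2_modeSum (M : ℕ) (A B : ℕ → ℂ) (ζ : ℂ) : pd2 (modeSum M A B) ζ =
    ∑ m ∈ Finset.range M, pd2 (mode m (A m) (B m)) ζ := by
  simp [pd2, fderiv_modeSum]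

theorem lapC_modeSum (M : ℕ) (A B : ℕ → ℂ) (ζ : ℂ) : lapC (modeSum M A B) ζ = 0 := by
  have d1 : ∀ m ∈ Finset.range M, DifferentiableAt ℝ (pd1 (mode m (A m) (B m))) ζ := fun m _ =>
    differentiableAt_pd1 isOpen_univ (contDiff_mode m (A m) (B m)).contDiffOn (mem_univ ζ)
  have d2 : ∀ m ∈ Finset.range M, DifferentiableAt ℝ (pd2 (mode m (A m) (B m))) ζ := fun m _ =>
    differentiableAt_pd2 isOpen_univ (contDiff_mode m (A m) (B m)).contDiffOn (mem_univ ζ)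
  have e1 : (fun y => pd1 (modeSum M A B) y) =
      fun y => ∑ m ∈ Finset.range M, pd1 (mode m (A m) (B m)) y := funext fun y => by
    rw [pd1_modeSum]; simp only [pd1_mode]
  have e2 : (fun y => pd2 (modeSum M A B) y) =
      fun y => ∑ m ∈ Finset.range M, pd2 (mode m (A m) (B m)) y := funext fun y =>
    pd2_modeSum M A B y
  rw [lapC, e1, e2, fderiv_fun_sum d1, fderiv_fun_sum d2]
  rw [sum_apply, sum_apply, ← Finset.sum_add_distrib]
  exact Finset.sum_eq_zero fun m _ => lapC_mode m (A m) (B m) ζ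

theorem mode_zero_im (m : ℕ) (A B : ℂ) (s : ℝ) : mode m A B ⟨s, 0⟩ = 0 := by simp [mode]

theorem mode_pi_im (m : ℕ) (A B : ℂ) (s : ℝ) : mode m A B ⟨s, π⟩ = 0 := by
  simp only [mode, Real.sin_nat_mul_pi]; simp

/-! ### Sine coefficients of a solution in logarithmic coordinates -/

/-- The part of the definition of a limit profile that is linear in the function: a continuous
solution of the magnetic Laplace equation vanishing on `{x₁ = 0}`. -/
structure IsSol (u : ℂ → ℂ) : Prop where
  cont : ContinuousOn u (closure {x : ℂ | 0 < x.re})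
  c2 : ContDiffOn ℝ 2 u ({x : ℂ | 0 < x.re} \ {1})
  bdry : ∀ x : ℂ, x.re = 0 → u x = 0
  eq : ∀ x ∈ ({x : ℂ | 0 < x.re} \ {1} : Set ℂ), magLap 1 u x = 0

/-- Weighted line integrals of the contracted functions `pull u lam` converge to those of `pull u 1`
as `lam → 1`. For `lam < 1` these functions are smooth up to the sides of the strip, where Green's
identity applies; this convergence transfers the outcome to `pull u 1`, which is only continuous
there. -/
theorem tendsto_pull {u : ℂ → ℂ} (hu : IsSol u) {p g : ℝ → ℂ} (hp : Continuous p)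
    (hg : Continuous g) {c d : ℝ} (hcd : c ≤ d) (hps : ∀ x ∈ Icc c d, p x ∈ closedStrip) :
    Tendsto (fun lam : ℝ => ∫ x in c..d, pull u lam (p x) * g x) (nhdsWithin 1 (Iio 1))
      (nhds (∫ x in c..d, pull u 1 (p x) * g x)) := by
  have h12 : (1 / 2 : ℝ) ≤ 1 := by norm_num
  let la : ℝ → ℝ := fun l => (projIcc (1 / 2 : ℝ) 1 h12 l : ℝ)
  let xx : ℝ → ℝ := fun x => (projIcc c d hcd x : ℝ)
  have hla : Continuous la := continuous_subtype_val.comp continuous_projIcc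
  have hxx : Continuous xx := continuous_subtype_val.comp continuous_projIcc
  let q : ℝ × ℝ → ℂ := fun y =>
    (la y.1 : ℂ) * p (xx y.2) + ((1 - la y.1) * (π / 2) : ℝ) * Complex.I
  have hq : Continuous q := by
    have h1 : Continuous fun y : ℝ × ℝ => la y.1 := hla.comp continuous_fst
    have h2 : Continuous fun y : ℝ × ℝ => p (xx y.2) := hp.comp (hxx.comp continuous_snd)
    exact ((Complex.continuous_ofReal.comp h1).mul h2).add
      ((Complex.continuous_ofReal.comp ((continuous_const.sub h1).mul continuous_const)).mul
        continuous_const)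
  have hqs : ∀ y, q y ∈ closedStrip := by
    intro y
    have hl : la y.1 ∈ Icc (1 / 2 : ℝ) 1 := (projIcc (1 / 2 : ℝ) 1 h12 y.1).2
    obtain ⟨h1, h2, h3⟩ := hps (xx y.2) (projIcc c d hcd y.2).2
    have hpi := Real.pi_pos
    simp only [q, closedStrip, mem_ofPred_eq]
    refine ⟨?_, ?_, ?_⟩
    · simp
      exact mul_pos (by linarith [hl.1]) h1
    · simp
      have := mul_nonneg (by linarith [hl.1] : 0 ≤ la y.1) h2
      have := mul_nonneg (by linarith [hl.2] : 0 ≤ 1 - la y.1) hpi.le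
      nlinarith
    · simp
      have := mul_le_mul_of_nonneg_left h3 (by linarith [hl.1] : 0 ≤ la y.1)
      have := mul_nonneg (by linarith [hl.2] : 0 ≤ 1 - la y.1) hpi.le
      nlinarith
  have hF : Continuous fun y : ℝ × ℝ => pull u 1 (q y) * g y.2 :=
    ((continuousOn_pull hu.cont).comp_continuous hq hqs).mul (hg.comp continuous_snd)
  have hG : Continuous fun l : ℝ => ∫ x in c..d, pull u 1 (q (l, x)) * g x :=
    intervalIntegral.continuous_parametric_intervalIntegral_of_continuous' hF c d
  have heq : ∀ l ∈ Icc (1 / 2 : ℝ) 1, (∫ x in c..d, pull u 1 (q (l, x)) * g x) =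
      ∫ x in c..d, pull u l (p x) * g x := by
    intro l hl
    refine intervalIntegral.integral_congr fun x hx => ?_
    rw [uIcc_of_le hcd] at hx
    simp only [q, la, xx]
    rw [projIcc_of_mem h12 hl, projIcc_of_mem hcd hx, pull_eq u l]
  have := (hG.tendsto 1).mono_left (nhdsWithin_le_nhds (s := Iio 1))
  rw [heq 1 ⟨h12, le_rfl⟩] at this
  refine this.congr' ?_
  filter_upwards [Ioo_mem_nhdsLT (by norm_num : (1 / 2 : ℝ) < 1)] with l hl
  exact heq l ⟨hl.1.le, hl.2.le⟩

theorem rect_subset_stripDom {lam : ℝ} (h0 : 0 < lam) (h1 : lam < 1) {a b : ℝ} (ha : 0 < a) :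
    ∀ s ∈ Icc a b, ∀ t ∈ Icc 0 π, (⟨s, t⟩ : ℂ) ∈ stripDom lam := by
  intro s hs t ht
  have hpi := Real.pi_pos
  have e1 := mul_nonneg h0.le ht.1
  have e2 := mul_le_mul_of_nonneg_left ht.2 h0.le
  have e3 := mul_pos (by linarith : 0 < 1 - lam) hpi
  refine ⟨lt_of_lt_of_le ha hs.1, ?_, ?_⟩ <;> simp only <;> nlinarith

/-- Testing the contracted function against a single mode: the volume terms in Green's identity
cancel, leaving a relation between boundary integrals. -/
theorem mode_identity {u : ℂ → ℂ} (hu : IsSol u) {lam : ℝ} (h0 : 0 < lam) (h1 : lam < 1)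
    (m : ℕ) (A B : ℂ) {b : ℝ} (hb : 1 ≤ b) :
    ((∫ t in 0..π, pull u lam ⟨b, t⟩ * pd1 (mode m A B) ⟨b, t⟩) -
      ∫ t in 0..π, pull u lam ⟨1, t⟩ * pd1 (mode m A B) ⟨1, t⟩) +
    ((∫ s in 1..b, pull u lam ⟨s, π⟩ * pd2 (mode m A B) ⟨s, π⟩) -
      ∫ s in 1..b, pull u lam ⟨s, 0⟩ * pd2 (mode m A B) ⟨s, 0⟩) =
    (∫ t in 0..π, mode m A B ⟨b, t⟩ * pd1 (pull u lam) ⟨b, t⟩) -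
      ∫ t in 0..π, mode m A B ⟨1, t⟩ * pd1 (pull u lam) ⟨1, t⟩ := by
  have hR := rect_subset_stripDom h0 h1 one_pos (b := b)
  have hW := contDiffOn_pull hu.c2 h0
  have hT := (contDiff_mode m A B).contDiffOn (s := stripDom lam)
  have g1 := green (isOpen_stripDom lam) hW hT (fun x _ => lapC_mode m A B x) hb Real.pi_pos.le hR
  have g2 := green (isOpen_stripDom lam) hT hW (fun x hx => lapC_pull hu.c2 hu.eq h0 hx) hb
    Real.pi_pos.le hR
  simp only [mode_zero_im, mode_pi_im, zero_mul, intervalIntegral.integral_zero, sub_zero,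
    add_zero] at g2
  rw [← g1, ← g2]
  simp only [mul_comm]

/-- The sine coefficient `∫₀^π V(s,t) sin (mt) dt` of the gauged solution `V` in log-coordinates. -/
def fcoef (u : ℂ → ℂ) (m : ℕ) (s : ℝ) : ℂ := ∫ t in 0..π, pull u 1 ⟨s, t⟩ * (Real.sin (m * t) : ℝ)

/-- The coefficient of the growing mode `e^{ms}` in `fcoef u m`, read off at `s = 1, 2`. -/
def coefA (u : ℂ → ℂ) (m : ℕ) : ℂ :=
  ((Real.exp (-m) : ℝ) * fcoef u m 2 - (Real.exp (-(2 * m)) : ℝ) * fcoef u m 1) /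
    (Real.exp m - Real.exp (-m) : ℝ)

/-- The coefficient of the decaying mode `e^{-ms}` in `fcoef u m`, read off at `s = 1, 2`. -/
def coefB (u : ℂ → ℂ) (m : ℕ) : ℂ :=
  ((Real.exp (2 * m) : ℝ) * fcoef u m 1 - (Real.exp m : ℝ) * fcoef u m 2) /
    (Real.exp m - Real.exp (-m) : ℝ)

theorem fcoef_zero (u : ℂ → ℂ) (s : ℝ) : fcoef u 0 s = 0 := by simp [fcoef]

theorem continuous_pd2_mode (m : ℕ) (A B : ℂ) : Continuous (pd2 (mode m A B)) :=
  continuousOn_univ.1 (contDiffOn_pd2 isOpen_univ (contDiff_mode m A B).contDiffOn).continuousOn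

/-- The boundary terms on the horizontal sides disappear in the limit, by the Dirichlet condition. -/
theorem tendsto_lateral {u : ℂ → ℂ} (hu : IsSol u) {T : ℂ → ℂ} (hT : Continuous T)
    {a b : ℝ} (ha : 0 < a) (hb : a ≤ b) :
    Tendsto (fun lam : ℝ => (∫ s in a..b, pull u lam ⟨s, π⟩ * T ⟨s, π⟩) -
      ∫ s in a..b, pull u lam ⟨s, 0⟩ * T ⟨s, 0⟩) (nhdsWithin 1 (Iio 1)) (nhds 0) := by
  have key : ∀ t : ℝ, t = 0 ∨ t = π →
      Tendsto (fun lam : ℝ => ∫ s in a..b, pull u lam ⟨s, t⟩ * T ⟨s, t⟩)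
        (nhdsWithin 1 (Iio 1)) (nhds 0) := by
    intro t ht
    have := tendsto_pull hu (continuous_mk_left t) (hT.comp (continuous_mk_left t)) hb
      (fun x hx => ?_)
    · have h0 : ∀ x : ℝ, pull u 1 (⟨x, t⟩ : ℂ) = 0 := fun x => pull_boundary hu.bdry ht
      simpa only [h0, Function.comp_apply, zero_mul, intervalIntegral.integral_zero] using this
    · have := Real.pi_pos
      refine ⟨lt_of_lt_of_le ha hx.1, ?_, ?_⟩ <;> rcases ht with rfl | rfl <;> simp [this.le]
  simpa using (key π (Or.inr rfl)).sub (key 0 (Or.inl rfl))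

/-- The sine coefficients are combinations of `e^{ms}` and `e^{-ms}`. This is derived without differentiating `fcoef`: the
relations `mode_identity` for the two modes `e^{± ms} sin (mt)` on the rectangles over `[1, 2]` and
`[1, s]` determine `fcoef u m s` in terms of its values at `1` and `2`. -/
theorem fcoef_eq {u : ℂ → ℂ} (hu : IsSol u) (m : ℕ) {s : ℝ} (hs : 1 ≤ s) :
    fcoef u m s = coefA u m * (Real.exp (m * s) : ℝ) + coefB u m * (Real.exp (-(m * s)) : ℝ) := by
  rcases Nat.eq_zero_or_pos m with rfl | hm
  · simp [fcoef_zero, coefA, coefB]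
  let I : ℝ → ℝ → ℂ := fun lam s => ∫ t in 0..π, pull u lam ⟨s, t⟩ * (Real.sin (m * t) : ℝ)
  let J : ℝ → ℝ → ℂ := fun lam s => ∫ t in 0..π, pd1 (pull u lam) ⟨s, t⟩ * (Real.sin (m * t) : ℝ)
  let L : ℂ → ℂ → ℝ → ℝ → ℂ := fun A B b lam =>
    (∫ s in 1..b, pull u lam ⟨s, π⟩ * pd2 (mode m A B) ⟨s, π⟩) -
      ∫ s in 1..b, pull u lam ⟨s, 0⟩ * pd2 (mode m A B) ⟨s, 0⟩
  have hL : ∀ A B b, 1 ≤ b → Tendsto (L A B b) (nhdsWithin 1 (Iio 1)) (nhds 0) := fun A B b hb =>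
    tendsto_lateral hu (continuous_pd2_mode m A B) one_pos hb
  have hI : ∀ b, 1 ≤ b → Tendsto (fun lam => I lam b) (nhdsWithin 1 (Iio 1))
      (nhds (fcoef u m b)) := fun b hb =>
    tendsto_pull hu (continuous_mk_right b) (by fun_prop) Real.pi_pos.le fun x hx =>
      ⟨lt_of_lt_of_le one_pos hb, hx.1, hx.2⟩
  have e1 : ∀ lam A B b, (∫ t in 0..π, pull u lam ⟨b, t⟩ * pd1 (mode m A B) ⟨b, t⟩) =
      m * (A * (Real.exp (m * b) : ℝ) - B * (Real.exp (-(m * b)) : ℝ)) * I lam b := by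
    intro lam A B b
    simp only [I]
    rw [← intervalIntegral.integral_const_mul]
    refine intervalIntegral.integral_congr fun t _ => ?_
    simp only [pd1_mode, mode]
    ring
  have e2 : ∀ lam A B b, (∫ t in 0..π, mode m A B ⟨b, t⟩ * pd1 (pull u lam) ⟨b, t⟩) =
      (A * (Real.exp (m * b) : ℝ) + B * (Real.exp (-(m * b)) : ℝ)) * J lam b := by
    intro lam A B b
    simp only [J]
    rw [← intervalIntegral.integral_const_mul]
    refine intervalIntegral.integral_congr fun t _ => ?_
    simp only [mode]
    ring
  let P : ℝ → ℂ := fun lam => (Real.exp m : ℝ) * (m * I lam 1 - J lam 1)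
  let Q : ℝ → ℂ := fun lam => (Real.exp (-m) : ℝ) * (m * I lam 1 + J lam 1)
  have key : ∀ b, 1 ≤ b → Tendsto (fun lam => (Real.exp (-(m * b)) : ℝ) * P lam +
      (Real.exp (m * b) : ℝ) * Q lam) (nhdsWithin 1 (Iio 1)) (nhds (2 * m * fcoef u m b)) := by
    intro b hb
    have h := (((hI b hb).const_mul (2 * m : ℂ)).add
      ((hL 1 0 b hb).const_mul ((Real.exp (-(m * b)) : ℝ) : ℂ))).sub
      ((hL 0 1 b hb).const_mul ((Real.exp (m * b) : ℝ) : ℂ))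
    simp only [mul_zero, add_zero, sub_zero] at h
    refine h.congr' ?_
    filter_upwards [Ioo_mem_nhdsLT (by norm_num : (0 : ℝ) < 1)] with lam hl
    have i1 := mode_identity hu hl.1 hl.2 m 1 0 hb
    have i2 := mode_identity hu hl.1 hl.2 m 0 1 hb
    simp only [e1, e2] at i1 i2
    have hee : ((Real.exp (m * b) : ℝ) : ℂ) * (Real.exp (-(m * b)) : ℝ) = 1 := by
      rw [← Complex.ofReal_mul, ← Real.exp_add]; simp
    simp only [P, Q, L]
    simp only [mul_one] at i1 i2
    linear_combination (Real.exp (-(m * b)) : ℝ) * i1 - (Real.exp (m * b) : ℝ) * i2 -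
      2 * m * I lam b * hee
  have k1 := key 1 le_rfl
  have k2 := key 2 (by norm_num)
  have ks := key s hs
  have hD : (Real.exp m - Real.exp (-m) : ℝ) ≠ 0 := by
    have : Real.exp (-m) < Real.exp m := Real.exp_lt_exp.2 (by
      have : (0 : ℝ) < m := by exact_mod_cast hm
      linarith)
    linarith
  have hDC : ((Real.exp m - Real.exp (-m) : ℝ) : ℂ) ≠ 0 := by exact_mod_cast hD
  have hee : ((Real.exp m : ℝ) : ℂ) * (Real.exp (-m) : ℝ) = 1 := by
    rw [← Complex.ofReal_mul, ← Real.exp_add]; simp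
  have h2 : ((Real.exp (2 * m) : ℝ) : ℂ) = (Real.exp m : ℝ) ^ 2 := by
    rw [← Complex.ofReal_pow, ← Real.exp_nat_mul]; simp
  have h2' : ((Real.exp (-(2 * m)) : ℝ) : ℂ) = (Real.exp (-m) : ℝ) ^ 2 := by
    rw [← Complex.ofReal_pow, ← Real.exp_nat_mul]; congr 3; push_cast; ring
  set x : ℂ := ((Real.exp m : ℝ) : ℂ) with hx
  set y : ℂ := ((Real.exp (-m) : ℝ) : ℂ) with hy
  set X : ℂ := ((Real.exp (m * s) : ℝ) : ℂ) with hX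
  set Y : ℂ := ((Real.exp (-(m * s)) : ℝ) : ℂ) with hY
  have hD' : ((Real.exp m - Real.exp (-m) : ℝ) : ℂ) = x - y := Complex.ofReal_sub _ _
  rw [hD'] at hDC
  have kk := (k1.const_mul (x ^ 2 * Y - y ^ 2 * X)).add (k2.const_mul (y * X - x * Y))
  have ks' := ks.const_mul (x - y)
  have := tendsto_nhds_unique_of_eventuallyEq ks' kk (Eventually.of_forall fun lam => ?_)
  · have hm0 : (m : ℂ) ≠ 0 := by exact_mod_cast hm.ne'
    rw [coefA, coefB, hD', h2, h2']
    field_simp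
    apply mul_left_cancel₀ (mul_ne_zero two_ne_zero hm0)
    linear_combination this
  · have r1 : ((Real.exp (m * 1) : ℝ) : ℂ) = x := by rw [mul_one]
    have r2 : ((Real.exp (-(m * 1)) : ℝ) : ℂ) = y := by rw [mul_one]
    have r3 : ((Real.exp (m * 2) : ℝ) : ℂ) = x ^ 2 := by rw [mul_comm, h2]
    have r4 : ((Real.exp (-(m * 2)) : ℝ) : ℂ) = y ^ 2 := by rw [mul_comm, h2']
    simp only [r1, r2, r3, r4]
    linear_combination (-(x - y) * (P lam * Y + Q lam * X)) * hee

/-! ### Lower bound for the energy in terms of the growing modes -/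

theorem iterated_eq_setIntegral {E : Type*} [NormedAddCommGroup E] [NormedSpace ℝ E] {F : ℂ → E}
    {a b c d : ℝ} (hab : a ≤ b) (hcd : c ≤ d)
    (hF : ContinuousOn F (Icc a b ×ℂ Icc c d)) :
    (∫ s in a..b, ∫ t in c..d, F ⟨s, t⟩) = ∫ z in Ioc a b ×ℂ Ioc c d, F z := by
  have hmp := Complex.volume_preserving_equiv_real_prod
  have hpre : Ioc a b ×ℂ Ioc c d = Complex.measurableEquivRealProd ⁻¹' (Ioc a b ×ˢ Ioc c d) := rfl
  have hcF : ContinuousOn (fun p : ℝ × ℝ => F ⟨p.1, p.2⟩) (Icc a b ×ˢ Icc c d) :=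
    hF.comp continuous_mk2.continuousOn fun p hp => ⟨hp.1, hp.2⟩
  have hFint : IntegrableOn (fun p : ℝ × ℝ => F ⟨p.1, p.2⟩) (Ioc a b ×ˢ Ioc c d)
      (volume.prod volume) :=
    (hcF.integrableOn_compact (isCompact_Icc.prod isCompact_Icc)).mono_set
      (prod_mono Ioc_subset_Icc_self Ioc_subset_Icc_self)
  have h1 := setIntegral_prod (fun p : ℝ × ℝ => F ⟨p.1, p.2⟩) hFint
  have h2 := hmp.setIntegral_preimage_emb Complex.measurableEquivRealProd.measurableEmbedding
    (fun p : ℝ × ℝ => F ⟨p.1, p.2⟩) (Ioc a b ×ˢ Ioc c d)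
  rw [← hpre] at h2
  rw [intervalIntegral.integral_of_le hab]
  simp only [intervalIntegral.integral_of_le hcd]
  rw [← h1]
  exact h2.symm

theorem det_mul_right (L : ℂ →L[ℝ] ℂ) (w : ℂ) (hL : ∀ h, L h = h * w) : L.det = ‖w‖ ^ 2 := by
  have : (L : ℂ →ₗ[ℝ] ℂ) = LinearMap.mul ℝ ℂ w := by
    ext
    simp [hL, mul_comm]
  rw [ContinuousLinearMap.det, this, ← Complex.normSq_eq_norm_sq, ← Algebra.norm_complex_apply,
    Algebra.norm_apply]
  rfl

theorem logMap_injOn {lam : ℝ} (h0 : 0 < lam) (h1 : lam < 1) (a b : ℝ) :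
    InjOn (logMap lam) (Ioc a b ×ℂ Ioc 0 π) := by
  intro z hz w hw h
  have hpi := Real.pi_pos
  simp only [logMap] at h
  have h' := mul_left_cancel₀ (neg_ne_zero.2 Complex.I_ne_zero) h
  obtain ⟨n, hn⟩ := Complex.exp_eq_exp_iff_exists_int.1 h'
  have hre := congrArg Complex.re hn
  have him := congrArg Complex.im hn
  simp at hre him
  have hr : z.re = w.re := by
    rcases hre with h | h
    · exact h
    · exact absurd h h0.ne'
  have hz2 := hz.2
  have hw2 := hw.2
  simp only [mem_preimage, mem_Ioc] at hz2 hw2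
  have hn0 : n = 0 := by
    have e : lam * (z.im - w.im) = n * (2 * π) := by linarith
    have u1 : lam * (z.im - w.im) < 2 * π := by nlinarith
    have u2 : -(2 * π) < lam * (z.im - w.im) := by nlinarith
    rw [e] at u1 u2
    have v1 : (n : ℝ) < 1 := by nlinarith
    have v2 : (-1 : ℝ) < n := by nlinarith
    have : n < 1 := by exact_mod_cast v1
    have : -1 < n := by exact_mod_cast v2
    omega
  subst hn0
  have : lam * (z.im - w.im) = 0 := by push_cast at him; linarith
  rcases mul_eq_zero.1 this with h | h
  · exact absurd h h0.ne'
  · exact Complex.ext hr (by linarith)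

/-- Conformal invariance of the Dirichlet energy: the energy of `pull u lam` on a rectangle is the
magnetic energy of `u` on its image, a subset of a half-disk. -/
theorem rect_energy_le {u : ℂ → ℂ} (hu : IsSol u)
    (hE : ∀ R > (0 : ℝ), IntegrableOn (mgSq 1 u) (halfDisk 0 R)) {lam : ℝ} (h0 : 0 < lam)
    (h1 : lam < 1) {b : ℝ} (hb : 1 ≤ b) :
    (∫ s in 1..b, ∫ t in 0..π, (‖pd1 (pull u lam) ⟨s, t⟩‖ ^ 2 + ‖pd2 (pull u lam) ⟨s, t⟩‖ ^ 2)) ≤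
      ∫ z in halfDisk 0 (Real.exp b), mgSq 1 u z := by
  have hR := rect_subset_stripDom h0 h1 one_pos (b := b)
  have hsub : Icc 1 b ×ℂ Icc 0 π ⊆ stripDom lam := fun z hz => hR z.re hz.1 z.im hz.2
  have hsub' : Ioc 1 b ×ℂ Ioc 0 π ⊆ Icc 1 b ×ℂ Icc 0 π := fun z hz =>
    ⟨Ioc_subset_Icc_self hz.1, Ioc_subset_Icc_self hz.2⟩
  have hW := contDiffOn_pull hu.c2 h0
  have c1 := (contDiffOn_pd1 (isOpen_stripDom lam) hW).continuousOn
  have c2 := (contDiffOn_pd2 (isOpen_stripDom lam) hW).continuousOn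
  rw [iterated_eq_setIntegral (F := fun z => ‖pd1 (pull u lam) z‖ ^ 2 + ‖pd2 (pull u lam) z‖ ^ 2)
    hb Real.pi_pos.le (((c1.norm.pow 2).add (c2.norm.pow 2)).mono hsub)]
  have hmeas : MeasurableSet (Ioc 1 b ×ℂ Ioc 0 π) :=
    (Complex.measurable_re measurableSet_Ioc).inter (Complex.measurable_im measurableSet_Ioc)
  choose L hL hL' using hasFDerivAt_logMap lam
  have hcov := integral_image_eq_integral_abs_det_fderiv_smul volume hmeas
    (fun z _ => (hL z).hasFDerivWithinAt) (logMap_injOn h0 h1 1 b) (mgSq 1 u)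
  have hee : (∫ z in Ioc 1 b ×ℂ Ioc 0 π, (‖pd1 (pull u lam) z‖ ^ 2 + ‖pd2 (pull u lam) z‖ ^ 2)) =
      ∫ z in logMap lam '' (Ioc 1 b ×ℂ Ioc 0 π), mgSq 1 u z := by
    rw [hcov]
    refine setIntegral_congr_fun hmeas fun z hz => ?_
    simp only [det_mul_right _ _ (hL' z), smul_eq_mul]
    rw [norm_grad_pull hu.c2 h0 (hsub (hsub' hz)), abs_of_nonneg (by positivity)]
  rw [hee]
  refine setIntegral_mono_set (hE _ (Real.exp_pos b)) ?_ (LE.le.eventuallyLE ?_)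
  · exact Eventually.of_forall fun z => by simp only [mgSq, Pi.zero_apply]; positivity
  · rintro _ ⟨z, hz, rfl⟩
    refine ⟨?_, (logMap_mem h0 (hsub (hsub' hz))).1⟩
    rw [dist_zero_right, norm_logMap]
    refine Real.exp_lt_exp.2 ?_
    have := hz.1
    simp only [mem_preimage, mem_Ioc] at this
    nlinarith

theorem integral_cos_int_mul (n : ℤ) : (∫ t in 0..π, Real.cos (n * t)) = if n = 0 then π else 0 := by
  split_ifs with h
  · simp [h]
  · have hn : (n : ℝ) ≠ 0 := by exact_mod_cast h
    rw [intervalIntegral.integral_comp_mul_left (fun x => Real.cos x) hn]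
    simp [Real.sin_int_mul_pi]

theorem integral_sin_mul_sin (m k : ℕ) : (∫ t in 0..π, Real.sin (m * t) * Real.sin (k * t)) =
    if m = k ∧ m ≠ 0 then π / 2 else 0 := by
  have e : ∀ t : ℝ, Real.sin (m * t) * Real.sin (k * t) =
      (1 / 2) * (Real.cos (((m : ℤ) - (k : ℤ) : ℤ) * t) - Real.cos (((m : ℤ) + (k : ℤ) : ℤ) * t)) := by
    intro t
    push_cast
    rw [sub_mul, add_mul, Real.cos_sub, Real.cos_add]; ring
  simp only [e]
  rw [intervalIntegral.integral_const_mul, intervalIntegral.integral_sub, integral_cos_int_mul,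
    integral_cos_int_mul]
  · split_ifs <;> first | omega | ring
  · exact Continuous.intervalIntegrable (by fun_prop) _ _
  · exact Continuous.intervalIntegrable (by fun_prop) _ _

theorem integral_mul_pd1_modeSum {g : ℝ → ℂ} (hg : ContinuousOn g (Icc 0 π)) (M : ℕ) (A B : ℕ → ℂ)
    (s : ℝ) : (∫ t in 0..π, g t * pd1 (modeSum M A B) ⟨s, t⟩) =
      ∑ m ∈ Finset.range M, m * (A m * (Real.exp (m * s) : ℝ) - B m * (Real.exp (-(m * s)) : ℝ)) *
        ∫ t in 0..π, g t * (Real.sin (m * t) : ℝ) := by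
  simp only [← intervalIntegral.integral_const_mul]
  rw [← intervalIntegral.integral_finsetSum]
  · refine intervalIntegral.integral_congr fun t _ => ?_
    simp only [pd1_modeSum, mode, Finset.mul_sum]
    exact Finset.sum_congr rfl fun m _ => by ring
  · intro m _
    refine ContinuousOn.intervalIntegrable ?_
    rw [uIcc_of_le Real.pi_pos.le]
    exact continuousOn_const.mul (hg.mul (by fun_prop))

theorem integral_modeSum_mul_sin (M : ℕ) (A B : ℕ → ℂ) (s : ℝ) {k : ℕ} (hk : k < M) :
    k * (∫ t in 0..π, modeSum M A B ⟨s, t⟩ * (Real.sin (k * t) : ℝ)) =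
      k * ((π / 2 : ℝ) * (A k * (Real.exp (k * s) : ℝ) + B k * (Real.exp (-(k * s)) : ℝ))) := by
  have : (∫ t in 0..π, modeSum M A B ⟨s, t⟩ * (Real.sin (k * t) : ℝ)) =
      ∑ m ∈ Finset.range M, (A m * (Real.exp (m * s) : ℝ) + B m * (Real.exp (-(m * s)) : ℝ)) *
        ((∫ t in 0..π, Real.sin (m * t) * Real.sin (k * t) : ℝ) : ℂ) := by
    simp only [← intervalIntegral.integral_ofReal, ← intervalIntegral.integral_const_mul]
    rw [← intervalIntegral.integral_finsetSum]
    · refine intervalIntegral.integral_congr fun t _ => ?_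
      simp only [modeSum, mode, Finset.sum_mul]
      exact Finset.sum_congr rfl fun m _ => by push_cast; ring
    · intro m _
      exact Continuous.intervalIntegrable (by fun_prop) _ _
  rw [this]
  rcases Nat.eq_zero_or_pos k with rfl | hk0
  · simp
  congr 1
  rw [Finset.sum_eq_single k]
  · rw [integral_sin_mul_sin, if_pos ⟨rfl, hk0.ne'⟩]; ring
  · intro m _ hm
    rw [integral_sin_mul_sin, if_neg (fun h => hm h.1)]; simp
  · intro h
    exact absurd (Finset.mem_range.2 hk) h

theorem conj_pd_modeSum (M : ℕ) (A B : ℕ → ℂ) (ζ : ℂ) :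
    pd1 (modeSum M (fun m => starRingEnd ℂ (A m)) fun m => starRingEnd ℂ (B m)) ζ =
      starRingEnd ℂ (pd1 (modeSum M A B) ζ) ∧
    pd2 (modeSum M (fun m => starRingEnd ℂ (A m)) fun m => starRingEnd ℂ (B m)) ζ =
      starRingEnd ℂ (pd2 (modeSum M A B) ζ) := by
  constructor
  · simp only [pd1_modeSum, mode, map_sum, map_mul, map_add, map_neg, Complex.conj_ofReal,
      Complex.conj_natCast]
  · simp only [pd2_modeSum, pd2_mode, map_sum, map_mul, map_add, Complex.conj_ofReal,
      Complex.conj_natCast]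

theorem sq_norm_lower (w τ : ℂ) :
    2 * (w * τ).re - (starRingEnd ℂ τ * τ).re ≤ ‖w‖ ^ 2 := by
  have : 0 ≤ ‖w - starRingEnd ℂ τ‖ ^ 2 := by positivity
  rw [← Complex.normSq_eq_norm_sq, Complex.normSq_apply] at *
  simp at *
  nlinarith

/-- Expansion of `‖∇W - ∇T̄‖² ≥ 0`, integrated over a rectangle, for `T = modeSum M A B`; the function
`T̄` is the same sum with conjugated coefficients. -/
theorem dirichlet_lower {W : ℂ → ℂ} {U : Set ℂ} (hU : IsOpen U) (hW : ContDiffOn ℝ 2 W U)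
    {a b c d : ℝ} (hab : a ≤ b) (hcd : c ≤ d)
    (hR : ∀ s ∈ Icc a b, ∀ t ∈ Icc c d, (⟨s, t⟩ : ℂ) ∈ U) (M : ℕ) (A B : ℕ → ℂ) :
    2 * (∫ s in a..b, ∫ t in c..d, (pd1 W ⟨s, t⟩ * pd1 (modeSum M A B) ⟨s, t⟩ +
      pd2 W ⟨s, t⟩ * pd2 (modeSum M A B) ⟨s, t⟩)).re -
    (∫ s in a..b, ∫ t in c..d,
      (pd1 (modeSum M (fun m => starRingEnd ℂ (A m)) fun m => starRingEnd ℂ (B m)) ⟨s, t⟩ *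
        pd1 (modeSum M A B) ⟨s, t⟩ +
      pd2 (modeSum M (fun m => starRingEnd ℂ (A m)) fun m => starRingEnd ℂ (B m)) ⟨s, t⟩ *
        pd2 (modeSum M A B) ⟨s, t⟩)).re ≤
    ∫ s in a..b, ∫ t in c..d, (‖pd1 W ⟨s, t⟩‖ ^ 2 + ‖pd2 W ⟨s, t⟩‖ ^ 2) := by
  have hsub : Icc a b ×ℂ Icc c d ⊆ U := fun z hz => hR z.re hz.1 z.im hz.2
  have hsub' : Ioc a b ×ℂ Ioc c d ⊆ Icc a b ×ℂ Icc c d := fun z hz =>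
    ⟨Ioc_subset_Icc_self hz.1, Ioc_subset_Icc_self hz.2⟩
  have hK : IsCompact (Icc a b ×ℂ Icc c d) := isCompact_Icc.reProdIm isCompact_Icc
  have cW1 := (contDiffOn_pd1 hU hW).continuousOn.mono hsub
  have cW2 := (contDiffOn_pd2 hU hW).continuousOn.mono hsub
  have cT : ∀ A B : ℕ → ℂ, ContinuousOn (pd1 (modeSum M A B)) (Icc a b ×ℂ Icc c d) ∧
      ContinuousOn (pd2 (modeSum M A B)) (Icc a b ×ℂ Icc c d) := fun A B =>
    ⟨(contDiffOn_pd1 isOpen_univ (contDiff_modeSum M A B).contDiffOn).continuousOn.mono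
      (subset_univ _),
    (contDiffOn_pd2 isOpen_univ (contDiff_modeSum M A B).contDiffOn).continuousOn.mono
      (subset_univ _)⟩
  obtain ⟨cT1, cT2⟩ := cT A B
  obtain ⟨cS1, cS2⟩ := cT (fun m => starRingEnd ℂ (A m)) (fun m => starRingEnd ℂ (B m))
  have f1 := (cW1.mul cT1).add (cW2.mul cT2)
  have f2 := (cS1.mul cT1).add (cS2.mul cT2)
  have f3 := (cW1.norm.pow 2).add (cW2.norm.pow 2)
  have i1 := (f1.integrableOn_compact hK (μ := volume)).mono_set hsub'
  have i2 := (f2.integrableOn_compact hK (μ := volume)).mono_set hsub'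
  have i3 := (f3.integrableOn_compact hK (μ := volume)).mono_set hsub'
  have q1 := iterated_eq_setIntegral hab hcd f1
  have q2 := iterated_eq_setIntegral hab hcd f2
  have q3 := iterated_eq_setIntegral hab hcd f3
  simp only [Pi.add_apply, Pi.mul_apply, Pi.pow_apply] at q1 q2 q3 i1 i2 i3
  rw [q1, q2, q3]
  have r1 := Complex.reCLM.integral_comp_comm i1
  have r2 := Complex.reCLM.integral_comp_comm i2
  simp only [Complex.reCLM_apply, Pi.add_apply, Pi.mul_apply] at r1 r2
  rw [← r1, ← r2, ← integral_const_mul, ← integral_sub]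
  · refine integral_mono ?_ i3 fun z => ?_
    · exact (i1.re.const_mul 2).sub i2.re
    · simp only [(conj_pd_modeSum M A B z).1, (conj_pd_modeSum M A B z).2, Complex.add_re]
      linarith [sq_norm_lower (pd1 W z) (pd1 (modeSum M A B) z),
        sq_norm_lower (pd2 W z) (pd2 (modeSum M A B) z)]
  · exact i1.re.const_mul 2
  · exact i2.re

/-- The energy in a half-disk bounds the contribution of the growing modes. The gauged solution is
compared with the conjugate of its own truncated mode expansion `modeSum M A B` on the rectangles
`[1, b] × [0, π]`. -/
theorem energy_lower {u : ℂ → ℂ} (hu : IsSol u)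
    (hE : ∀ R > (0 : ℝ), IntegrableOn (mgSq 1 u) (halfDisk 0 R)) (M : ℕ) {b : ℝ} (hb : 1 ≤ b) :
    (2 / π) * ∑ m ∈ Finset.range M, m * ‖coefA u m‖ ^ 2 *
      (Real.exp (m * b) ^ 2 - Real.exp m ^ 2) ≤ ∫ z in halfDisk 0 (Real.exp b), mgSq 1 u z := by
  have hpi := Real.pi_pos
  let A : ℕ → ℂ := fun m => (2 / π : ℝ) * starRingEnd ℂ (coefA u m)
  let B : ℕ → ℂ := fun m => (2 / π : ℝ) * starRingEnd ℂ (coefB u m)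
  let F : ℝ → ℂ := fun s => ∑ m ∈ Finset.range M,
    m * (A m * (Real.exp (m * s) : ℝ) - B m * (Real.exp (-(m * s)) : ℝ)) * fcoef u m s
  have hT2 : ContDiffOn ℝ 2 (modeSum M A B) univ := (contDiff_modeSum M A B).contDiffOn
  have cpd2 : Continuous (pd2 (modeSum M A B)) :=
    continuousOn_univ.1 (contDiffOn_pd2 isOpen_univ hT2).continuousOn
  have cpd1 : Continuous (pd1 (modeSum M A B)) :=
    continuousOn_univ.1 (contDiffOn_pd1 isOpen_univ hT2).continuousOn
  have hside : ∀ s, modeSum M (fun m => starRingEnd ℂ (A m)) (fun m => starRingEnd ℂ (B m))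
      ⟨s, 0⟩ = 0 ∧ modeSum M (fun m => starRingEnd ℂ (A m)) (fun m => starRingEnd ℂ (B m))
      ⟨s, π⟩ = 0 := fun s => by simp [modeSum, mode_zero_im, mode_pi_im]
  -- the Dirichlet integral of the comparison function
  have hS : (∫ s in 1..b, ∫ t in 0..π,
      (pd1 (modeSum M (fun m => starRingEnd ℂ (A m)) fun m => starRingEnd ℂ (B m)) ⟨s, t⟩ *
        pd1 (modeSum M A B) ⟨s, t⟩ +
      pd2 (modeSum M (fun m => starRingEnd ℂ (A m)) fun m => starRingEnd ℂ (B m)) ⟨s, t⟩ *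
        pd2 (modeSum M A B) ⟨s, t⟩)) = F b - F 1 := by
    rw [green isOpen_univ (contDiff_modeSum M _ _).contDiffOn hT2
      (fun x _ => lapC_modeSum M A B x) hb hpi.le (fun _ _ _ _ => mem_univ _)]
    have key : ∀ s, 1 ≤ s → (∫ t in 0..π,
        modeSum M (fun m => starRingEnd ℂ (A m)) (fun m => starRingEnd ℂ (B m)) ⟨s, t⟩ *
        pd1 (modeSum M A B) ⟨s, t⟩) = F s := by
      intro s hs
      rw [integral_mul_pd1_modeSum (g := fun t =>
        modeSum M (fun m => starRingEnd ℂ (A m)) (fun m => starRingEnd ℂ (B m)) ⟨s, t⟩)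
        (((contDiff_modeSum M _ _).continuous.comp (continuous_mk_right s)).continuousOn)]
      refine Finset.sum_congr rfl fun m hm => ?_
      have := integral_modeSum_mul_sin M (fun m => starRingEnd ℂ (A m))
        (fun m => starRingEnd ℂ (B m)) s (Finset.mem_range.1 hm)
      have hAB : starRingEnd ℂ (A m) = (2 / π : ℝ) * coefA u m ∧
          starRingEnd ℂ (B m) = (2 / π : ℝ) * coefB u m := by
        simp only [A, B, map_mul, Complex.conj_ofReal, Complex.conj_conj, and_self]
      have hc : ((π / 2 : ℝ) : ℂ) * (2 / π : ℝ) = 1 := by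
        rw [← Complex.ofReal_mul]; norm_cast; field_simp
      rw [hAB.1, hAB.2] at this
      rw [fcoef_eq hu m hs]
      linear_combination (A m * (Real.exp (m * s) : ℝ) - B m * (Real.exp (-(m * s)) : ℝ)) * this +
        (A m * (Real.exp (m * s) : ℝ) - B m * (Real.exp (-(m * s)) : ℝ)) * m *
        (coefA u m * (Real.exp (m * s) : ℝ) + coefB u m * (Real.exp (-(m * s)) : ℝ)) * hc
    rw [key b hb, key 1 le_rfl]
    simp [(hside _).1, (hside _).2]
  -- the cross term, in the limit `lam → 1`
  have hcross : Tendsto (fun lam : ℝ => ∫ s in 1..b, ∫ t in 0..π,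
      (pd1 (pull u lam) ⟨s, t⟩ * pd1 (modeSum M A B) ⟨s, t⟩ +
        pd2 (pull u lam) ⟨s, t⟩ * pd2 (modeSum M A B) ⟨s, t⟩)) (nhdsWithin 1 (Iio 1))
      (nhds (F b - F 1)) := by
    have key : ∀ s, 1 ≤ s → Tendsto (fun lam => ∫ t in 0..π,
        pull u lam ⟨s, t⟩ * pd1 (modeSum M A B) ⟨s, t⟩) (nhdsWithin 1 (Iio 1)) (nhds (F s)) := by
      intro s hs
      have hst : ∀ x ∈ Icc (0 : ℝ) π, (⟨s, x⟩ : ℂ) ∈ closedStrip := fun x hx =>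
        ⟨lt_of_lt_of_le one_pos hs, hx.1, hx.2⟩
      have := tendsto_pull hu (continuous_mk_right s) (cpd1.comp (continuous_mk_right s)) hpi.le hst
      simp only [Function.comp_apply] at this
      rwa [integral_mul_pd1_modeSum (g := fun t => pull u 1 ⟨s, t⟩)
        ((continuousOn_pull hu.cont).comp (continuous_mk_right s).continuousOn hst)] at this
    have h := ((key b hb).sub (key 1 le_rfl)).add (tendsto_lateral hu cpd2 one_pos hb)
    rw [add_zero] at h
    refine h.congr' ?_
    filter_upwards [Ioo_mem_nhdsLT (by norm_num : (0 : ℝ) < 1)] with lam hl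
    exact (green (isOpen_stripDom lam) (contDiffOn_pull hu.c2 hl.1)
      (contDiff_modeSum M A B).contDiffOn (fun x _ => lapC_modeSum M A B x) hb hpi.le
      (rect_subset_stripDom hl.1 hl.2 one_pos)).symm
  have hlim : (F b - F 1).re ≤ ∫ z in halfDisk 0 (Real.exp b), mgSq 1 u z := by
    have h := ((Complex.continuous_re.tendsto _).comp hcross).const_mul 2 |>.sub_const (F b - F 1).re
    have e : 2 * (F b - F 1).re - (F b - F 1).re = (F b - F 1).re := by ring
    rw [e] at h
    refine le_of_tendsto h ?_
    filter_upwards [Ioo_mem_nhdsLT (by norm_num : (0 : ℝ) < 1)] with lam hl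
    have := dirichlet_lower (isOpen_stripDom lam) (contDiffOn_pull hu.c2 hl.1) hb hpi.le
      (rect_subset_stripDom hl.1 hl.2 one_pos) M A B
    rw [hS] at this
    exact this.trans (rect_energy_le hu hE hl.1 hl.2 hb)
  refine le_trans ?_ hlim
  have hF : ∀ s, 1 ≤ s → (F s).re = (2 / π) * ∑ m ∈ Finset.range M,
      m * (‖coefA u m‖ ^ 2 * Real.exp (m * s) ^ 2 - ‖coefB u m‖ ^ 2 * Real.exp (-(m * s)) ^ 2) := by
    intro s hs
    simp only [F, Complex.re_sum, Finset.mul_sum]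
    refine Finset.sum_congr rfl fun m _ => ?_
    rw [fcoef_eq hu m hs, ← Complex.normSq_eq_norm_sq, ← Complex.normSq_eq_norm_sq,
      Complex.normSq_apply, Complex.normSq_apply]
    simp only [A, B]
    generalize coefA u m = α
    generalize coefB u m = β
    generalize Real.exp (m * s) = X
    generalize Real.exp (-(m * s)) = Y
    generalize 2 / π = k
    have hm : (m : ℂ) = ((m : ℝ) : ℂ) := by push_cast; rfl
    rw [hm]
    simp only [Complex.mul_re, Complex.mul_im, Complex.add_re, Complex.add_im, Complex.sub_re,
      Complex.sub_im, Complex.ofReal_re, Complex.ofReal_im, Complex.conj_re, Complex.conj_im]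
    ring
  rw [Complex.sub_re, hF b hb, hF 1 le_rfl, ← mul_sub, ← Finset.sum_sub_distrib]
  refine mul_le_mul_of_nonneg_left (Finset.sum_le_sum fun m _ => ?_) (by positivity)
  have hY : Real.exp (-(m * b)) ^ 2 ≤ Real.exp (-(m * 1 : ℝ)) ^ 2 := by
    gcongr
  rw [mul_one] at hY ⊢
  have := mul_le_mul_of_nonneg_left hY (by positivity : 0 ≤ m * ‖coefB u m‖ ^ 2)
  nlinarith

/-! ### Sine series on `[0, π]` -/

/-- The continuous odd extension to `ℝ` of a continuous function on `[0, π]` vanishing at the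
endpoints, equal to zero outside `[-π, π]`. -/
def oddExt (g : ℝ → ℂ) (t : ℝ) : ℂ :=
  g (projIcc 0 π Real.pi_pos.le t) - g (projIcc 0 π Real.pi_pos.le (-t))

section sine
variable {g : ℝ → ℂ}

theorem continuous_ext (hg : ContinuousOn g (Icc 0 π)) :
    Continuous fun t : ℝ => g (projIcc 0 π Real.pi_pos.le t) :=
  hg.comp_continuous (continuous_subtype_val.comp continuous_projIcc) fun t => (projIcc 0 π _ t).2

theorem continuous_oddExt (hg : ContinuousOn g (Icc 0 π)) : Continuous (oddExt g) :=
  (continuous_ext hg).sub ((continuous_ext hg).comp continuous_neg)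

theorem ext_of_nonpos (h0 : g 0 = 0) {t : ℝ} (ht : t ≤ 0) :
    g (projIcc 0 π Real.pi_pos.le t) = 0 := by
  rw [projIcc_of_le_left _ ht]; exact h0

theorem ext_of_mem {t : ℝ} (ht : t ∈ Icc 0 π) : g (projIcc 0 π Real.pi_pos.le t) = g t := by
  rw [projIcc_of_mem _ ht]

theorem oddExt_of_mem (h0 : g 0 = 0) {t : ℝ} (ht : t ∈ Icc 0 π) : oddExt g t = g t := by
  rw [oddExt, ext_of_mem (g := g) ht, ext_of_nonpos h0 (by linarith [ht.1]), sub_zero]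

theorem oddExt_neg (t : ℝ) : oddExt g (-t) = -oddExt g t := by simp [oddExt]

theorem integral_ext_mul (hg : ContinuousOn g (Icc 0 π)) (h0 : g 0 = 0) {k : ℝ → ℂ}
    (hk : Continuous k) : (∫ t in -π..π, k t * g (projIcc 0 π Real.pi_pos.le t)) =
      ∫ t in 0..π, k t * g t := by
  have hc : Continuous fun t => k t * g (projIcc 0 π Real.pi_pos.le t) := hk.mul (continuous_ext hg)
  rw [← intervalIntegral.integral_add_adjacent_intervals (b := 0) (hc.intervalIntegrable _ _)
    (hc.intervalIntegrable _ _)]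
  have e1 : (∫ t in -π..0, k t * g (projIcc 0 π Real.pi_pos.le t)) = 0 := by
    rw [intervalIntegral.integral_congr (g := fun _ => 0)]
    · simp
    · intro t ht
      rw [uIcc_of_le (by linarith [Real.pi_pos])] at ht
      simp only [ext_of_nonpos h0 ht.2, mul_zero]
  rw [e1, zero_add]
  refine intervalIntegral.integral_congr fun t ht => ?_
  rw [uIcc_of_le Real.pi_pos.le] at ht
  simp only [ext_of_mem (g := g) ht]

theorem fourierCoeffOn_oddExt (hg : ContinuousOn g (Icc 0 π)) (h0 : g 0 = 0) (n : ℤ) {b : ℝ}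
    (hb : -π < b) (hbp : b = π) : fourierCoeffOn hb (oddExt g) n =
      -(Complex.I / π) * ∫ t in 0..π, g t * (Real.sin (n * t) : ℝ) := by
  subst hbp
  have hpi : (π : ℂ) ≠ 0 := by exact_mod_cast Real.pi_ne_zero
  rw [fourierCoeffOn_eq_integral]
  have e : ∀ t : ℝ, fourier (-n) (t : AddCircle (π - -π)) = Complex.exp (-(n * t) * Complex.I) := by
    intro t
    rw [fourier_coe_apply]
    congr 1
    push_cast
    field_simp
    ring
  simp only [e, smul_eq_mul, oddExt, mul_sub]
  have ck : Continuous fun t : ℝ => Complex.exp (-(n * t) * Complex.I) := by fun_prop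
  have ck' : Continuous fun t : ℝ => Complex.exp (n * t * Complex.I) := by fun_prop
  have cf1 : Continuous fun t : ℝ => Complex.exp (-(n * t) * Complex.I) *
      g (projIcc 0 π Real.pi_pos.le t) := ck.mul (continuous_ext hg)
  have cf2 : Continuous fun t : ℝ => Complex.exp (-(n * t) * Complex.I) *
      g (projIcc 0 π Real.pi_pos.le (-t)) := ck.mul ((continuous_ext hg).comp continuous_neg)
  rw [intervalIntegral.integral_sub (cf1.intervalIntegrable _ _) (cf2.intervalIntegrable _ _)]
  have e2 : (∫ t in -π..π, Complex.exp (-(n * t) * Complex.I) *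
      g (projIcc 0 π Real.pi_pos.le (-t))) =
      ∫ t in -π..π, Complex.exp (n * t * Complex.I) * g (projIcc 0 π Real.pi_pos.le t) := by
    have := intervalIntegral.integral_comp_neg (a := -π) (b := π) (fun t : ℝ =>
      Complex.exp (n * t * Complex.I) * g (projIcc 0 π Real.pi_pos.le t))
    rw [neg_neg] at this
    rw [← this]
    refine intervalIntegral.integral_congr fun t _ => ?_
    simp
  have cg : ∀ {k : ℝ → ℂ}, Continuous k →
      IntervalIntegrable (fun t => k t * g t) volume 0 π := fun hk => by
    refine ContinuousOn.intervalIntegrable ?_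
    rw [uIcc_of_le Real.pi_pos.le]
    exact hk.continuousOn.mul hg
  rw [e2, integral_ext_mul hg h0 ck, integral_ext_mul hg h0 ck', ← intervalIntegral.integral_sub
    (cg ck) (cg ck'), ← intervalIntegral.integral_const_mul, ← intervalIntegral.integral_smul]
  refine intervalIntegral.integral_congr fun t _ => ?_
  simp only [Complex.real_smul, Complex.ofReal_sin]
  rw [Complex.sin]
  push_cast
  field_simp
  rw [Complex.I_sq]
  ring_nf

theorem sine_coef_neg (m : ℕ) : (∫ t in 0..π, g t * (Real.sin (((-(m : ℤ) : ℤ) : ℝ) * t) : ℝ)) =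
    -∫ t in 0..π, g t * (Real.sin (m * t) : ℝ) := by
  rw [← intervalIntegral.integral_neg]
  refine intervalIntegral.integral_congr fun t _ => ?_
  simp only [Int.cast_neg, Int.cast_natCast, neg_mul, Real.sin_neg]
  push_cast; ring

/-- Parseval's identity for the sine coefficients. -/
theorem hasSum_sq_sine (hg : ContinuousOn g (Icc 0 π)) (h0 : g 0 = 0) :
    HasSum (fun m : ℕ => ‖∫ t in 0..π, g t * (Real.sin (m * t) : ℝ)‖ ^ 2)
      (π / 2 * ∫ t in 0..π, ‖g t‖ ^ 2) := by
  have hpi := Real.pi_pos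
  have hab : -π < π := by linarith
  have hc := continuous_oddExt hg
  obtain ⟨C, hC⟩ := (isCompact_Icc (a := -π) (b := π)).exists_bound_of_continuousOn hc.continuousOn
  have hL2 : MemLp (oddExt g) 2 (volume.restrict (Ioc (-π) π)) :=
    MemLp.of_bound hc.aestronglyMeasurable C ((ae_restrict_iff' measurableSet_Ioc).2
      (Eventually.of_forall fun x hx => hC x (Ioc_subset_Icc_self hx)))
  have h := (hasSum_sq_fourierCoeffOn hab hL2).nat_add_neg
  simp only [fourierCoeffOn_oddExt hg h0 _ hab rfl] at h
  have hz : (∫ x in -π..π, ‖oddExt g x‖ ^ 2) = 2 * ∫ t in 0..π, ‖g t‖ ^ 2 := by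
    have hcc : Continuous fun x => ‖oddExt g x‖ ^ 2 := hc.norm.pow 2
    rw [← intervalIntegral.integral_add_adjacent_intervals (b := 0) (hcc.intervalIntegrable _ _)
      (hcc.intervalIntegrable _ _)]
    have e1 := intervalIntegral.integral_comp_neg (a := 0) (b := π) (fun x => ‖oddExt g x‖ ^ 2)
    simp only [oddExt_neg, norm_neg, neg_zero] at e1
    rw [← e1, two_mul]
    congr 1 <;>
    · refine intervalIntegral.integral_congr fun t ht => ?_
      rw [uIcc_of_le hpi.le] at ht
      simp only [oddExt_of_mem h0 ht]
  rw [hz] at h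
  have h' := h.mul_left (π ^ 2 / 2)
  have hval : π ^ 2 / 2 * ((π - -π)⁻¹ • (2 * ∫ t in 0..π, ‖g t‖ ^ 2) +
      ‖-(Complex.I / π) * ∫ t in 0..π, g t * (Real.sin (((0 : ℤ) : ℝ) * t) : ℝ)‖ ^ 2) =
      π / 2 * ∫ t in 0..π, ‖g t‖ ^ 2 := by
    simp
    field_simp
    ring
  rw [hval] at h'
  refine (congrArg (fun F => HasSum F _) (funext fun m => ?_)).mpr h'
  rw [sine_coef_neg]
  simp only [Int.cast_natCast, norm_mul, norm_neg, norm_div, Complex.norm_I,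
    Complex.norm_real, Real.norm_eq_abs, abs_of_pos hpi]
  field_simp
  ring

theorem sine_series (hg : ContinuousOn g (Icc 0 π)) (h0 : g 0 = 0) (hp : g π = 0)
    (hs : Summable fun m : ℕ => ‖∫ t in 0..π, g t * (Real.sin (m * t) : ℝ)‖) {t : ℝ}
    (ht : t ∈ Ico 0 π) :
    HasSum (fun m : ℕ => (2 / π : ℝ) * ((∫ t in 0..π, g t * (Real.sin (m * t) : ℝ)) *
      (Real.sin (m * t) : ℝ))) (g t) := by
  have hpi := Real.pi_pos
  have hpic : (π : ℂ) ≠ 0 := by exact_mod_cast Real.pi_ne_zero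
  have : Fact (0 < 2 * π) := ⟨by positivity⟩
  have e2 : -π + 2 * π = π := by ring
  have hend : oddExt g (-π) = oddExt g (-π + 2 * π) := by
    rw [e2, oddExt_neg, oddExt_of_mem h0 ⟨hpi.le, le_rfl⟩, hp, neg_zero]
  let f : C(AddCircle (2 * π), ℂ) := ⟨AddCircle.liftIco (2 * π) (-π) (oddExt g),
    AddCircle.liftIco_continuous hend (continuous_oddExt hg).continuousOn⟩
  have hco : ∀ n : ℤ, fourierCoeff f n =
      -(Complex.I / π) * ∫ t in 0..π, g t * (Real.sin (n * t) : ℝ) := by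
    intro n
    change fourierCoeff (AddCircle.liftIco (2 * π) (-π) (oddExt g)) n = _
    rw [fourierCoeff_liftIco_eq]
    exact fourierCoeffOn_oddExt hg h0 n _ e2
  have hsum : Summable (fourierCoeff f) := by
    refine Summable.of_norm ?_
    have hs' : Summable fun m : ℕ => ‖-(Complex.I / π : ℂ)‖ *
      ‖∫ t in 0..π, g t * (Real.sin (m * t) : ℝ)‖ := hs.mul_left _
    refine Summable.of_nat_of_neg ?_ ?_
    · refine hs'.congr fun m => ?_
      rw [hco, norm_mul]; simp
    · refine hs'.congr fun m => ?_
      rw [hco, norm_mul, sine_coef_neg, norm_neg (∫ t in 0..π, _)]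
  have h := (has_pointwise_sum_fourier_series_of_summable hsum (t : AddCircle (2 * π))).nat_add_neg
  have hf : f (t : AddCircle (2 * π)) = g t := by
    change AddCircle.liftIco (2 * π) (-π) (oddExt g) _ = _
    rw [AddCircle.liftIco_coe_apply ⟨by linarith [ht.1], by linarith [ht.2]⟩,
      oddExt_of_mem h0 ⟨ht.1, ht.2.le⟩]
  rw [hf] at h
  have hz : fourierCoeff f 0 = 0 := by rw [hco]; simp
  rw [hz, zero_smul, add_zero] at h
  refine (congrArg (fun F => HasSum F _) (funext fun m => ?_)).mpr h
  rw [hco, hco, sine_coef_neg, fourier_coe_apply, fourier_coe_apply, Complex.ofReal_sin,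
    Complex.sin]
  have a1 : 2 * (π : ℂ) * Complex.I * ((m : ℤ) : ℂ) * t / ((2 * π : ℝ) : ℂ) =
      (m * t : ℝ) * Complex.I := by push_cast; field_simp
  have a2 : 2 * (π : ℂ) * Complex.I * ((-(m : ℤ) : ℤ) : ℂ) * t / ((2 * π : ℝ) : ℂ) =
      -(m * t : ℝ) * Complex.I := by push_cast; field_simp
  rw [a1, a2]
  simp only [Int.cast_natCast, smul_eq_mul]
  push_cast
  field_simp
  ring
end sine

/-! ### Consequences of the normalization: only the first growing mode survives -/

section growth
variable {u : ℂ → ℂ}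

theorem continuousOn_slice (hu : IsSol u) {s : ℝ} (hs : 0 < s) :
    ContinuousOn (fun t : ℝ => pull u 1 ⟨s, t⟩) (Icc 0 π) :=
  (continuousOn_pull hu.cont).comp (continuous_mk_right s).continuousOn fun _ hx =>
    ⟨hs, hx.1, hx.2⟩

/-- The function `H(u, e^s, 0)` in logarithmic coordinates. -/
def sliceSq (u : ℂ → ℂ) (s : ℝ) : ℝ := ∫ t in 0..π, ‖pull u 1 ⟨s, t⟩‖ ^ 2

theorem hasSum_fcoef (hu : IsSol u) {s : ℝ} (hs : 0 < s) :
    HasSum (fun m => ‖fcoef u m s‖ ^ 2) (π / 2 * sliceSq u s) :=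
  hasSum_sq_sine (continuousOn_slice hu hs) (pull_boundary hu.bdry (Or.inl rfl))

theorem exists_fcoef_bound (hu : IsSol u) {s : ℝ} (hs : 0 < s) :
    ∃ C, 0 ≤ C ∧ ∀ m, ‖fcoef u m s‖ ≤ C := by
  refine ⟨Real.sqrt (π / 2 * sliceSq u s), Real.sqrt_nonneg _, fun m => ?_⟩
  exact Real.le_sqrt_of_sq_le (le_hasSum (hasSum_fcoef hu hs) m fun _ _ => by positivity)

theorem coefA_zero (u : ℂ → ℂ) : coefA u 0 = 0 := by simp [coefA]

theorem coefB_zero (u : ℂ → ℂ) : coefB u 0 = 0 := by simp [coefB]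

theorem exp_sub_exp_neg_ge {m : ℕ} (hm : 0 < m) :
    Real.exp m / 2 ≤ Real.exp m - Real.exp (-m) := by
  have h1 : (1 : ℝ) ≤ m := by exact_mod_cast hm
  have h2 : (2 : ℝ) ≤ Real.exp m := by linarith [Real.add_one_le_exp (m : ℝ)]
  have h3 : Real.exp (-m) ≤ 1 := Real.exp_le_one_iff.2 (by linarith)
  linarith

theorem exists_coefA_bound (hu : IsSol u) {s : ℝ} (hs : 1 ≤ s) :
    ∃ K, 0 ≤ K ∧ ∀ m : ℕ, ‖coefA u m‖ * Real.exp (m * s) ≤ K * Real.exp (-m) := by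
  obtain ⟨C, hC0, hC⟩ := exists_fcoef_bound hu (by linarith : 0 < s)
  obtain ⟨C', hC0', hC'⟩ := exists_fcoef_bound hu (by linarith : 0 < s + 1)
  refine ⟨2 * (C' + C), by positivity, fun m => ?_⟩
  rcases Nat.eq_zero_or_pos m with rfl | hm
  · simp [coefA_zero]; positivity
  have e1 : ((Real.exp (m * (s + 1)) : ℝ) : ℂ) = (Real.exp (m * s) : ℝ) * (Real.exp m : ℝ) := by
    rw [← Complex.ofReal_mul, ← Real.exp_add]; congr 2; ring
  have e2 : ((Real.exp (-(m * (s + 1))) : ℝ) : ℂ) =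
      (Real.exp (-(m * s)) : ℝ) * (Real.exp (-m) : ℝ) := by
    rw [← Complex.ofReal_mul, ← Real.exp_add]; congr 2; ring
  have h : coefA u m * ((Real.exp (m * s) * (Real.exp m - Real.exp (-m)) : ℝ) : ℂ) =
      fcoef u m (s + 1) - (Real.exp (-m) : ℝ) * fcoef u m s := by
    rw [fcoef_eq hu m hs, fcoef_eq hu m (by linarith : 1 ≤ s + 1), e1, e2, Complex.ofReal_mul,
      Complex.ofReal_sub]
    ring
  have h' := congrArg norm h
  have hge := exp_sub_exp_neg_ge hm
  have hpos := Real.exp_pos (m : ℝ)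
  rw [norm_mul, Complex.norm_real, Real.norm_eq_abs, abs_of_nonneg (by
    refine mul_nonneg (Real.exp_pos _).le (by linarith))] at h'
  have hle : ‖fcoef u m (s + 1) - (Real.exp (-m) : ℝ) * fcoef u m s‖ ≤ C' + C := by
    refine (norm_sub_le _ _).trans (add_le_add (hC' m) ?_)
    rw [norm_mul, Complex.norm_real, Real.norm_eq_abs, abs_of_pos (Real.exp_pos _)]
    refine (mul_le_of_le_one_left (norm_nonneg _) (Real.exp_le_one_iff.2 (by simp))).trans (hC m)
  have hinv : Real.exp (-m) = (Real.exp m)⁻¹ := Real.exp_neg _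
  have h3 : ‖coefA u m‖ * Real.exp (m * s) * (Real.exp m / 2) ≤ C' + C := by
    refine le_trans ?_ (h'.le.trans hle)
    rw [mul_assoc]
    gcongr
  rw [hinv, ← div_eq_mul_inv, le_div_iff₀ hpos]
  linarith

theorem exists_coefB_bound (hu : IsSol u) :
    ∃ K, 0 ≤ K ∧ ∀ m : ℕ, ‖coefB u m‖ ≤ K * Real.exp m := by
  obtain ⟨C, hC0, hC⟩ := exists_fcoef_bound hu one_pos
  obtain ⟨C', hC0', hC'⟩ := exists_fcoef_bound hu two_pos
  refine ⟨2 * (C' + C), by positivity, fun m => ?_⟩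
  rcases Nat.eq_zero_or_pos m with rfl | hm
  · simp [coefB_zero]; positivity
  have hge := exp_sub_exp_neg_ge hm
  have hpos := Real.exp_pos (m : ℝ)
  have h1m : 1 ≤ Real.exp (m : ℝ) := Real.one_le_exp (by positivity)
  have h2 : Real.exp (2 * m) = Real.exp m ^ 2 := by rw [← Real.exp_nat_mul]; simp
  rw [coefB, norm_div, Complex.norm_real, Real.norm_eq_abs, abs_of_nonneg (by linarith),
    div_le_iff₀ (by linarith)]
  have hle : ‖(Real.exp (2 * m) : ℝ) * fcoef u m 1 - (Real.exp m : ℝ) * fcoef u m 2‖ ≤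
      Real.exp m ^ 2 * C + Real.exp m ^ 2 * C' := by
    refine (norm_sub_le _ _).trans (add_le_add ?_ ?_)
    · rw [norm_mul, Complex.norm_real, Real.norm_eq_abs, abs_of_pos (Real.exp_pos _), h2]
      gcongr
      exact hC m
    · rw [norm_mul, Complex.norm_real, Real.norm_eq_abs, abs_of_pos (Real.exp_pos _)]
      gcongr
      · nlinarith
      · exact hC' m
  refine hle.trans ?_
  have : 2 * (C' + C) * Real.exp m * (Real.exp m / 2) ≤
      2 * (C' + C) * Real.exp m * (Real.exp m - Real.exp (-m)) := by gcongr
  nlinarith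

theorem summable_mul_exp_neg : Summable fun m : ℕ => (m : ℝ) * Real.exp (-m) := by
  have := Real.summable_pow_mul_exp_neg_nat_mul 1 one_pos
  simpa using this

theorem summable_A (hu : IsSol u) {s : ℝ} (hs : 1 ≤ s) :
    (Summable fun m : ℕ => ‖coefA u m‖ ^ 2 * Real.exp (m * s) ^ 2) ∧
    Summable fun m : ℕ => m * (‖coefA u m‖ ^ 2 * Real.exp (m * s) ^ 2) := by
  obtain ⟨K, hK, h⟩ := exists_coefA_bound hu hs
  have hb : ∀ m : ℕ, ‖coefA u m‖ ^ 2 * Real.exp (m * s) ^ 2 ≤ K ^ 2 * Real.exp (-m) := by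
    intro m
    rw [← mul_pow]
    have h1 : Real.exp (-(m : ℝ)) ≤ 1 := Real.exp_le_one_iff.2 (by simp)
    have h2 := Real.exp_pos (-(m : ℝ))
    calc _ ≤ (K * Real.exp (-m)) ^ 2 := by
          exact pow_le_pow_left₀ (by positivity) (h m) 2
      _ = K ^ 2 * (Real.exp (-m) * Real.exp (-m)) := by ring
      _ ≤ K ^ 2 * Real.exp (-m) := by
          gcongr
          nlinarith
  refine ⟨Summable.of_nonneg_of_le (fun m => by positivity) hb (summable_exp_neg_nat.mul_left _),
    Summable.of_nonneg_of_le (fun m => by positivity) (fun m => ?_)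
      (summable_mul_exp_neg.mul_left (K ^ 2))⟩
  calc _ ≤ (m : ℝ) * (K ^ 2 * Real.exp (-m)) := by
        exact mul_le_mul_of_nonneg_left (hb m) (by positivity)
    _ = _ := by ring

theorem summable_B (hu : IsSol u) {s : ℝ} (hs : 2 ≤ s) :
    Summable fun m : ℕ => ‖coefB u m‖ ^ 2 * Real.exp (-(m * s)) ^ 2 := by
  obtain ⟨K, hK, h⟩ := exists_coefB_bound hu
  refine Summable.of_nonneg_of_le (fun m => by positivity) (fun m => ?_)
    (summable_exp_neg_nat.mul_left (K ^ 2))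
  have hm : (0 : ℝ) ≤ m := by positivity
  calc _ ≤ (K * Real.exp m) ^ 2 * Real.exp (-(m * s)) ^ 2 := by
        gcongr
        exact h m
    _ = K ^ 2 * Real.exp (2 * (m - m * s)) := by
        rw [mul_pow, mul_assoc, ← mul_pow, ← Real.exp_add, ← Real.exp_nat_mul]
        congr 2
    _ ≤ _ := by
        gcongr
        nlinarith

/-- The weight `6/5` satisfies `5/4 · 6/5 = 3/2 < 2`, which leaves room for absorbing the growing
modes of order `m ≥ 2`. -/
theorem sq_fcoef_le (hu : IsSol u) (m : ℕ) {s : ℝ} (hs : 1 ≤ s) :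
    ‖fcoef u m s‖ ^ 2 ≤ 6 / 5 * (‖coefA u m‖ ^ 2 * Real.exp (m * s) ^ 2) +
      6 * (‖coefB u m‖ ^ 2 * Real.exp (-(m * s)) ^ 2) := by
  have h : ‖fcoef u m s‖ ≤ ‖coefA u m‖ * Real.exp (m * s) + ‖coefB u m‖ * Real.exp (-(m * s)) := by
    rw [fcoef_eq hu m hs]
    refine (norm_add_le _ _).trans_eq ?_
    simp only [norm_mul, Complex.norm_real, Real.norm_eq_abs, abs_of_pos (Real.exp_pos _)]
  rw [← mul_pow, ← mul_pow]
  set x := ‖coefA u m‖ * Real.exp (m * s)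
  set y := ‖coefB u m‖ * Real.exp (-(m * s))
  calc _ ≤ (x + y) ^ 2 := by gcongr
    _ ≤ _ := by nlinarith [sq_nonneg (x - 5 * y)]

theorem logMap_one (s t : ℝ) : logMap 1 ⟨s, t⟩ = circleMap 0 (Real.exp s) (t - π / 2) := by
  have hI : -Complex.I = Complex.exp (-π / 2 * Complex.I) := by
    rw [Complex.exp_neg_pi_div_two_mul_I]
  simp only [logMap, circleMap, zero_add, Complex.ofReal_exp]
  rw [hI, ← Complex.exp_add, ← Complex.exp_add]
  congr 1
  apply Complex.ext <;> simp <;> ring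

/-- The boundary integral over the half-circle of radius `e^s` in logarithmic coordinates. -/
theorem bdryInt_exp (u : ℂ → ℂ) (s : ℝ) :
    (bdryInt 0 (Real.exp s) fun x => ‖u x‖ ^ 2) = Real.exp s * sliceSq u s := by
  have hpi := Real.pi_pos
  rw [bdryInt, ← integral_Ioc_eq_integral_Ioo, ← intervalIntegral.integral_of_le (by linarith),
    intervalIntegral.integral_const_mul, sliceSq]
  simp only [norm_pull, logMap_one]
  have := intervalIntegral.integral_comp_sub_right (a := 0) (b := π)
    (fun θ => ‖u (circleMap 0 (Real.exp s) θ)‖ ^ 2) (π / 2)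
  rw [this]
  congr 2 <;> ring

/-- For large `s` the energy is at most `5/4` of `sliceSq u s`. Writing `X m = |A_m|² e^{2ms}`, the
lower bound on the energy and Parseval's identity give `∑ m X m ≤ 3/2 ∑ X m + O(1)`, and hence
`X k ≤ X 1 + O(1)` for each `k ≥ 2`, which fails for large `s` unless `A_k = 0`. -/
theorem growing_modes_vanish (hu : IsSol u)
    (hE : ∀ R > (0 : ℝ), IntegrableOn (mgSq 1 u) (halfDisk 0 R))
    (hN : Tendsto (fun r : ℝ => r * (∫ x in halfDisk 0 r, mgSq 1 u x) /
      bdryInt 0 r fun x => ‖u x‖ ^ 2) atTop (nhds 1)) {k : ℕ} (hk : 2 ≤ k) : coefA u k = 0 := by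
  have hpi := Real.pi_pos
  have hN' := hN.comp Real.tendsto_exp_atTop
  have hev : ∀ᶠ s in atTop, (∫ x in halfDisk 0 (Real.exp s), mgSq 1 u x) ≤ 5 / 4 * sliceSq u s := by
    filter_upwards [hN'.eventually (Ioo_mem_nhds (by norm_num : (1 / 2 : ℝ) < 1)
      (by norm_num : (1 : ℝ) < 5 / 4))] with s hs
    simp only [Function.comp_apply, bdryInt_exp] at hs
    rw [mul_div_mul_left _ _ (Real.exp_pos s).ne'] at hs
    have h0 : 0 ≤ sliceSq u s :=
      intervalIntegral.integral_nonneg hpi.le fun t _ => by positivity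
    rcases h0.eq_or_lt with h | h
    · rw [← h] at hs
      norm_num at hs
    · exact ((div_lt_iff₀ h).1 hs.2).le
  -- a bound, uniform in `s`, for the terms of lower order
  let c : ℕ → ℝ := fun m => 15 / 2 * (‖coefB u m‖ ^ 2 * Real.exp (-(m * 2)) ^ 2) +
    m * (‖coefA u m‖ ^ 2 * Real.exp (m * 1) ^ 2)
  have hc : Summable c := ((summable_B hu le_rfl).mul_left _).add (summable_A hu le_rfl).2
  have hmain : ∀ᶠ s in atTop, 1 / 2 * (‖coefA u k‖ ^ 2 * Real.exp (k * s) ^ 2) ≤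
      (∑' m, c m) + 1 / 2 * (‖coefA u 1‖ ^ 2 * Real.exp s ^ 2) := by
    filter_upwards [hev, eventually_ge_atTop 2] with s hs hs2
    have hs1 : 1 ≤ s := by linarith
    let X : ℕ → ℝ := fun m => ‖coefA u m‖ ^ 2 * Real.exp (m * s) ^ 2
    let Y : ℕ → ℝ := fun m => ‖coefB u m‖ ^ 2 * Real.exp (-(m * s)) ^ 2
    let X1 : ℕ → ℝ := fun m => m * (‖coefA u m‖ ^ 2 * Real.exp (m * 1) ^ 2)
    have sX : Summable X := (summable_A hu hs1).1
    have smX : Summable fun m : ℕ => m * X m := (summable_A hu hs1).2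
    have sY : Summable Y := summable_B hu hs2
    have sX1 : Summable X1 := (summable_A hu le_rfl).2
    have hX0 : ∀ m, 0 ≤ X m := fun m => by positivity
    have hlow : (∑' m : ℕ, (m * X m - X1 m)) ≤ π / 2 * (5 / 4 * sliceSq u s) := by
      refine (smX.sub sX1).tsum_le_of_sum_range_le (fun M => ?_)
      have := (energy_lower hu hE M hs1).trans hs
      have h2 := mul_le_mul_of_nonneg_left this (by positivity : 0 ≤ π / 2)
      rw [← mul_assoc, div_mul_div_cancel₀ (by norm_num), div_self hpi.ne', one_mul] at h2
      refine le_trans (le_of_eq (Finset.sum_congr rfl fun m _ => ?_)) h2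
      simp only [X, X1, mul_one]
      ring
    have hup : π / 2 * sliceSq u s ≤ 6 / 5 * (∑' m, X m) + 6 * ∑' m, Y m := by
      rw [← (hasSum_fcoef hu (by linarith : 0 < s)).tsum_eq, ← tsum_mul_left, ← tsum_mul_left,
        ← (sX.mul_left _).tsum_add (sY.mul_left _)]
      exact (hasSum_fcoef hu (by linarith : 0 < s)).summable.tsum_le_tsum
        (fun m => sq_fcoef_le hu m hs1) ((sX.mul_left _).add (sY.mul_left _))
    rw [smX.tsum_sub sX1] at hlow
    -- the terms of the combined inequality, completed to be nonnegative
    let Z : ℕ → ℝ := fun m => m * X m - 3 / 2 * X m - 15 / 2 * Y m - X1 m + c m +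
      (if m = 1 then 1 / 2 * X 1 else 0)
    have hite : HasSum (fun m : ℕ => if m = 1 then 1 / 2 * X 1 else 0) (1 / 2 * X 1) :=
      hasSum_ite_eq 1 (1 / 2 * X 1)
    have hZ : HasSum Z ((∑' m : ℕ, m * X m) - 3 / 2 * (∑' m, X m) - 15 / 2 * (∑' m, Y m) -
        (∑' m, X1 m) + (∑' m, c m) + 1 / 2 * X 1) :=
      ((((smX.hasSum.sub (sX.hasSum.mul_left _)).sub (sY.hasSum.mul_left _)).sub sX1.hasSum).add
        hc.hasSum).add hite
    have hYc : ∀ m, 15 / 2 * Y m + X1 m ≤ c m := by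
      intro m
      have : Real.exp (-(m * s)) ≤ Real.exp (-(m * 2)) := by gcongr
      simp only [Y, X1, c]
      gcongr
    have hZ0 : ∀ m, 0 ≤ Z m := by
      intro m
      have := hYc m
      have hx := hX0 m
      rcases Nat.lt_or_ge m 2 with h | h
      · interval_cases m
        · have : X 0 = 0 := by simp [X, coefA_zero]
          simp only [Z, this]
          norm_num
          linarith
        · simp only [Z]
          norm_num
          linarith
      · have h2 : (2 : ℝ) ≤ m := by exact_mod_cast h
        have hne : m ≠ 1 := by omega
        simp only [Z, if_neg hne]
        nlinarith
    have hle := le_hasSum hZ k fun m _ => hZ0 m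
    have hk2 : (2 : ℝ) ≤ k := by exact_mod_cast hk
    have hZk : 1 / 2 * X k ≤ Z k := by
      have hne : k ≠ 1 := by omega
      have := hYc k
      have hx := hX0 k
      simp only [Z, if_neg hne]
      nlinarith
    have hX1 : X 1 = ‖coefA u 1‖ ^ 2 * Real.exp s ^ 2 := by simp [X]
    rw [← hX1]
    change 1 / 2 * X k ≤ _
    linarith
  by_contra hne
  have hpos : 0 < ‖coefA u k‖ ^ 2 := by positivity
  have hc0 : 0 ≤ ∑' m, c m := tsum_nonneg fun m => by positivity
  obtain ⟨s, h1, h2, h3⟩ := (hmain.and ((eventually_ge_atTop 0).and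
    (Real.tendsto_exp_atTop.eventually_gt_atTop
      ((2 * (∑' m, c m) + ‖coefA u 1‖ ^ 2) / ‖coefA u k‖ ^ 2)))).exists
  rw [div_lt_iff₀ hpos] at h3
  have hy : 1 ≤ Real.exp s := Real.one_le_exp h2
  have hyk : Real.exp s ^ 2 ≤ Real.exp (k * s) := by
    rw [← Real.exp_nat_mul]
    have hk2 : (2 : ℝ) ≤ k := by exact_mod_cast hk
    gcongr
  set y := Real.exp s
  have e1 : ‖coefA u k‖ ^ 2 * (y ^ 2) ^ 2 ≤ ‖coefA u k‖ ^ 2 * Real.exp (k * s) ^ 2 := by gcongr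
  have e2 : 2 * (∑' m, c m) + ‖coefA u 1‖ ^ 2 * y ^ 2 ≤
      (2 * (∑' m, c m) + ‖coefA u 1‖ ^ 2) * y ^ 2 := by nlinarith [one_le_pow₀ hy (n := 2)]
  have e3 : (2 * (∑' m, c m) + ‖coefA u 1‖ ^ 2) * y ^ 2 < y * ‖coefA u k‖ ^ 2 * y ^ 2 := by gcongr
  have e4 : y * ‖coefA u k‖ ^ 2 * y ^ 2 ≤ ‖coefA u k‖ ^ 2 * (y ^ 2) ^ 2 := by
    have : y * y ^ 2 ≤ (y ^ 2) ^ 2 := by nlinarith [one_le_pow₀ hy (n := 2), one_le_pow₀ hy (n := 3)]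
    nlinarith
  linarith

/-- A solution without growing modes decays at infinity. -/
theorem decay (hu : IsSol u) (hA : ∀ m, coefA u m = 0) :
    ∃ K, ∀ z : ℂ, 0 ≤ z.re → Real.exp 2 ≤ ‖z‖ → ‖u z‖ ≤ K / ‖z‖ := by
  have hpi := Real.pi_pos
  obtain ⟨K, hK, h⟩ := exists_coefB_bound hu
  let S := ∑' m : ℕ, Real.exp (-(m : ℝ))
  have key : ∀ s : ℝ, 2 ≤ s → ∀ t ∈ Ico 0 π,
      ‖pull u 1 ⟨s, t⟩‖ ≤ (2 / π * (K * S * Real.exp 2)) * Real.exp (-s) := by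
    intro s hs t ht
    have hb : ∀ m : ℕ, ‖fcoef u m s‖ ≤ K * Real.exp (2 - s) * Real.exp (-m) := by
      intro m
      rcases Nat.eq_zero_or_pos m with rfl | hm
      · simp only [fcoef_zero, norm_zero]; positivity
      have hm1 : (1 : ℝ) ≤ m := by exact_mod_cast hm
      rw [fcoef_eq hu m (by linarith), hA, zero_mul, zero_add, norm_mul, Complex.norm_real,
        Real.norm_eq_abs, abs_of_pos (Real.exp_pos _)]
      calc _ ≤ K * Real.exp m * Real.exp (-(m * s)) := by
            gcongr
            exact h m
        _ = K * Real.exp (m - m * s) := by rw [mul_assoc, ← Real.exp_add]; congr 2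
        _ ≤ K * Real.exp ((2 - s) + -m) := by
            gcongr
            nlinarith
        _ = _ := by rw [Real.exp_add]; ring
    have hsm : Summable fun m : ℕ => K * Real.exp (2 - s) * Real.exp (-(m : ℝ)) :=
      summable_exp_neg_nat.mul_left _
    have hsum : Summable fun m : ℕ => ‖fcoef u m s‖ :=
      Summable.of_nonneg_of_le (fun _ => norm_nonneg _) hb hsm
    have hser := sine_series (continuousOn_slice hu (by linarith : 0 < s))
      (pull_boundary hu.bdry (Or.inl rfl)) (pull_boundary hu.bdry (Or.inr rfl)) hsum ht
    rw [← hser.tsum_eq]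
    have hle : ∀ m : ℕ, ‖((2 / π : ℝ) : ℂ) * ((∫ t in 0..π, pull u 1 ⟨s, t⟩ *
        (Real.sin (m * t) : ℝ)) * (Real.sin (m * t) : ℝ))‖ ≤
        2 / π * (K * Real.exp (2 - s) * Real.exp (-(m : ℝ))) := by
      intro m
      rw [norm_mul, norm_mul, Complex.norm_real, Complex.norm_real, Real.norm_eq_abs,
        Real.norm_eq_abs, abs_of_pos (by positivity : 0 < 2 / π)]
      exact mul_le_mul_of_nonneg_left ((mul_le_of_le_one_right (norm_nonneg _)
        (Real.abs_sin_le_one _)).trans (hb m)) (by positivity)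
    refine (tsum_of_norm_bounded (hsm.mul_left (2 / π)).hasSum hle).trans_eq ?_
    rw [tsum_mul_left, tsum_mul_left, Real.exp_sub, Real.exp_neg]
    simp only [S]
    field_simp
  refine ⟨2 / π * (K * S * Real.exp 2), fun z hz hz2 => ?_⟩
  have hz0 : 0 < ‖z‖ := lt_of_lt_of_le (Real.exp_pos 2) hz2
  rcases hz.eq_or_lt with h0 | h0
  · rw [hu.bdry z h0.symm, norm_zero]
    have : 0 ≤ S := tsum_nonneg fun m => (Real.exp_pos _).le
    positivity
  have harg := Complex.abs_arg_lt_pi_div_two_iff.2 (Or.inl h0)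
  rw [abs_lt] at harg
  have := key (Real.log ‖z‖) ((Real.le_log_iff_exp_le hz0).2 hz2) (z.arg + π / 2)
    ⟨by linarith [harg.1], by linarith [harg.2]⟩
  rw [norm_pull, logMap_one, Real.exp_log hz0, Real.exp_neg, Real.exp_log hz0] at this
  have hzz : circleMap 0 ‖z‖ (z.arg + π / 2 - π / 2) = z := by
    rw [add_sub_cancel_right, circleMap, zero_add, Complex.norm_mul_exp_arg_mul_I]
  rw [hzz] at this
  rwa [div_eq_mul_inv]
end growth

/-! ### Linearity -/

section linearity
variable {u v : ℂ → ℂ}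

theorem pd_sub_smul (c : ℂ) {x : ℂ} (hu : DifferentiableAt ℝ u x) (hv : DifferentiableAt ℝ v x) :
    pd1 (fun z => v z - c * u z) x = pd1 v x - c * pd1 u x ∧
    pd2 (fun z => v z - c * u z) x = pd2 v x - c * pd2 u x := by
  have h := (hv.hasFDerivAt.fun_sub (hu.hasFDerivAt.const_mul c)).fderiv
  simp [pd1, pd2, h]

theorem IsSol.sub_smul (hu : IsSol u) (hv : IsSol v) (c : ℂ) :
    IsSol fun z => v z - c * u z where
  cont := hv.cont.sub (continuousOn_const.mul hu.cont)
  c2 := hv.c2.sub (contDiffOn_const.mul hu.c2)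
  bdry := fun x hx => by simp [hu.bdry x hx, hv.bdry x hx]
  eq := fun x hx => by
    have hU := isOpen_punctured
    have dd : ∀ y ∈ ({x : ℂ | 0 < x.re} \ {1} : Set ℂ),
        pd1 (fun z => v z - c * u z) y = pd1 v y - c * pd1 u y ∧
        pd2 (fun z => v z - c * u z) y = pd2 v y - c * pd2 u y := fun y hy =>
      pd_sub_smul c (differentiableAt_of_c2 hU hu.c2 hy) (differentiableAt_of_c2 hU hv.c2 hy)
    have e1 : (fun y => pd1 (fun z => v z - c * u z) y) =ᶠ[nhds x]
        fun y => pd1 v y - c * pd1 u y :=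
      eventually_of_mem (hU.mem_nhds hx) fun y hy => (dd y hy).1
    have e2 : (fun y => pd2 (fun z => v z - c * u z) y) =ᶠ[nhds x]
        fun y => pd2 v y - c * pd2 u y :=
      eventually_of_mem (hU.mem_nhds hx) fun y hy => (dd y hy).2
    have f1 := ((differentiableAt_pd1 hU hv.c2 hx).hasFDerivAt.fun_sub
      ((differentiableAt_pd1 hU hu.c2 hx).hasFDerivAt.const_mul c)).fderiv
    have f2 := ((differentiableAt_pd2 hU hv.c2 hx).hasFDerivAt.fun_sub
      ((differentiableAt_pd2 hU hu.c2 hx).hasFDerivAt.const_mul c)).fderiv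
    have hL : lapC (fun z => v z - c * u z) x = lapC v x - c * lapC u x := by
      unfold lapC
      rw [e1.fderiv_eq, e2.fderiv_eq, f1, f2]
      simp
      ring
    have hu0 := hu.eq x hx
    have hv0 := hv.eq x hx
    simp only [magLap] at hu0 hv0 ⊢
    rw [hL, (dd x hx).1, (dd x hx).2]
    linear_combination hv0 - c * hu0

theorem fcoef_sub_smul (hu : IsSol u) (hv : IsSol v) (c : ℂ) (m : ℕ) {s : ℝ} (hs : 0 < s) :
    fcoef (fun z => v z - c * u z) m s = fcoef v m s - c * fcoef u m s := by
  have hi : ∀ {w : ℂ → ℂ}, IsSol w → IntervalIntegrable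
      (fun t : ℝ => pull w 1 ⟨s, t⟩ * (Real.sin (m * t) : ℝ)) volume 0 π := by
    intro w hw
    apply ContinuousOn.intervalIntegrable
    rw [uIcc_of_le Real.pi_pos.le]
    exact (continuousOn_slice hw hs).mul (by fun_prop)
  rw [fcoef, fcoef, fcoef, ← intervalIntegral.integral_const_mul,
    ← intervalIntegral.integral_sub (hi hv) ((hi hu).const_mul c)]
  congr 1
  funext t
  simp only [pull, gauged]
  ring

theorem coefA_sub_smul (hu : IsSol u) (hv : IsSol v) (c : ℂ) (m : ℕ) :
    coefA (fun z => v z - c * u z) m = coefA v m - c * coefA u m := by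
  simp only [coefA, fcoef_sub_smul hu hv c m one_pos, fcoef_sub_smul hu hv c m two_pos]
  ring

end linearity

/-! ### The maximum principle -/

theorem second_deriv_nonpos {g g' : ℝ → ℝ} {c : ℝ} (h1 : ∀ᶠ t in nhds 0, HasDerivAt g (g' t) t)
    (h2 : HasDerivAt g' c 0) (hmax : IsLocalMax g 0) : c ≤ 0 := by
  by_contra! hc
  have e : deriv g =ᶠ[nhds 0] g' := h1.mono fun t ht => ht.deriv
  have e2 : deriv (deriv g) 0 = c := by rw [e.deriv_eq, h2.deriv]
  have hmin : IsLocalMin g 0 := isLocalMin_of_deriv_deriv_pos (by rw [e2]; exact hc)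
    hmax.deriv_eq_zero h1.self_of_nhds.continuousAt
  have hconst : g =ᶠ[nhds 0] fun _ => g 0 := by
    filter_upwards [hmin, hmax] with t ha hb using le_antisymm hb ha
  have hz : deriv g =ᶠ[nhds 0] fun _ => 0 := by simpa using hconst.deriv
  rw [hz.deriv_eq] at e2
  simp at e2
  exact hc.ne e2

/-- Second derivative of `‖h‖²` along a line. -/
theorem second_deriv_normSq {h h' : ℝ → ℂ} {h'' : ℂ}
    (h1 : ∀ᶠ t in nhds 0, HasDerivAt h (h' t) t) (h2 : HasDerivAt h' h'' 0) :
    (∀ᶠ t in nhds 0, HasDerivAt (fun t => Complex.normSq (h t))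
      (2 * ((h t).re * (h' t).re + (h t).im * (h' t).im)) t) ∧
    HasDerivAt (fun t => 2 * ((h t).re * (h' t).re + (h t).im * (h' t).im))
      (2 * (Complex.normSq (h' 0) + ((h 0).re * h''.re + (h 0).im * h''.im))) 0 := by
  have re : ∀ {f : ℝ → ℂ} {f' : ℂ} {t : ℝ}, HasDerivAt f f' t →
      HasDerivAt (fun t => (f t).re) f'.re t := fun hf =>
    Complex.reCLM.hasFDerivAt.comp_hasDerivAt _ hf
  have im : ∀ {f : ℝ → ℂ} {f' : ℂ} {t : ℝ}, HasDerivAt f f' t →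
      HasDerivAt (fun t => (f t).im) f'.im t := fun hf =>
    Complex.imCLM.hasFDerivAt.comp_hasDerivAt _ hf
  constructor
  · filter_upwards [h1] with t ht
    simp only [Complex.normSq_apply]
    exact (((re ht).fun_mul (re ht)).fun_add ((im ht).fun_mul (im ht))).congr_deriv (by ring)
  · have h0 := h1.self_of_nhds
    refine ((((re h0).fun_mul (re h2)).fun_add ((im h0).fun_mul (im h2))).const_mul 2).congr_deriv ?_
    rw [Complex.normSq_apply]
    ring

/-- The barrier `ρ + log ρ` with `ρ = |z - 1|²`, which has Laplacian `4` and tends to `-∞` at the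
pole. -/
def barrier (z : ℂ) : ℝ := Complex.normSq (z - 1) + Real.log (Complex.normSq (z - 1))

/-- Second derivative of the barrier along the line `x + t v`, `|v| = 1`. -/
theorem second_deriv_barrier {x v : ℂ} (hx : x ≠ 1) (hv : Complex.normSq v = 1) :
    ∃ q' : ℝ → ℝ, (∀ᶠ t : ℝ in nhds 0, HasDerivAt (fun t : ℝ => barrier (x + t * v)) (q' t) t) ∧
    HasDerivAt q' (2 + 2 / Complex.normSq (x - 1) -
      (2 * ((x - 1).re * v.re + (x - 1).im * v.im)) ^ 2 / Complex.normSq (x - 1) ^ 2) 0 := by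
  have hl : ∀ t : ℝ, HasDerivAt (fun t : ℝ => x + t * v - 1) v t := fun t => by
    simpa using (((Complex.ofRealCLM.hasDerivAt (x := t)).mul_const v).const_add x).sub_const 1
  obtain ⟨ha, hb⟩ := second_deriv_normSq (h := fun t : ℝ => x + t * v - 1) (h' := fun _ => v)
    (h'' := 0) (Eventually.of_forall hl) (hasDerivAt_const _ _)
  have hx0 : Complex.normSq (x - 1) ≠ 0 := by simpa [sub_eq_zero] using hx
  have hcont : ContinuousAt (fun t : ℝ => Complex.normSq (x + t * v - 1)) 0 := by fun_prop
  have hne : ∀ᶠ t : ℝ in nhds 0, Complex.normSq (x + t * v - 1) ≠ 0 :=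
    hcont.eventually_ne (by simpa using hx0)
  let r' : ℝ → ℝ := fun t => 2 * ((x + t * v - 1).re * v.re + (x + t * v - 1).im * v.im)
  refine ⟨fun t => r' t + r' t / Complex.normSq (x + t * v - 1), ?_, ?_⟩
  · filter_upwards [ha, hne] with t h1 h2 using h1.fun_add (h1.log h2)
  · refine (hb.fun_add (hb.fun_div ha.self_of_nhds (by simpa using hx0))).congr_deriv ?_
    simp [hv]
    field_simp
    ring

theorem second_deriv_sol {d : ℂ → ℂ} (hd : IsSol d) {x v : ℂ}
    (hx : x ∈ ({x : ℂ | 0 < x.re} \ {1} : Set ℂ)) {p : ℂ → ℂ}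
    (hp : p = fun y => fderiv ℝ d y v) :
    ∃ g' : ℝ → ℝ,
    (∀ᶠ t : ℝ in nhds 0, HasDerivAt (fun t : ℝ => Complex.normSq (d (x + t * v))) (g' t) t) ∧
    HasDerivAt g' (2 * (Complex.normSq (p x) +
      ((d x).re * (fderiv ℝ p x v).re + (d x).im * (fderiv ℝ p x v).im))) 0 := by
  have hU := isOpen_punctured
  have hl : ∀ t : ℝ, HasDerivAt (fun t : ℝ => x + t * v) v t := fun t => by
    simpa using ((Complex.ofRealCLM.hasDerivAt (x := t)).mul_const v).const_add x
  have hmem : ∀ᶠ t : ℝ in nhds 0, x + t * v ∈ ({x : ℂ | 0 < x.re} \ {1} : Set ℂ) := by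
    have : ContinuousAt (fun t : ℝ => x + t * v) 0 := by fun_prop
    exact this.eventually_mem (hU.mem_nhds (by simpa using hx))
  have h1 : ∀ᶠ t : ℝ in nhds 0, HasDerivAt (fun t : ℝ => d (x + t * v)) (p (x + t * v)) t := by
    filter_upwards [hmem] with t ht
    rw [hp]
    exact (differentiableAt_of_c2 hU hd.c2 ht).hasFDerivAt.comp_hasDerivAt t (hl t)
  have hpd : DifferentiableAt ℝ p (x + ((0 : ℝ) : ℂ) * v) := by
    have : ContDiffOn ℝ 1 p ({x : ℂ | 0 < x.re} \ {1}) := by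
      rw [hp]
      exact (hd.c2.fderiv_of_isOpen hU (by norm_num)).clm_apply contDiffOn_const
    rw [Complex.ofReal_zero, zero_mul, add_zero]
    exact (this.contDiffAt (hU.mem_nhds hx)).differentiableAt (by norm_num)
  have h2 : HasDerivAt (fun t : ℝ => p (x + t * v))
      (fderiv ℝ p (x + ((0 : ℝ) : ℂ) * v) v) 0 :=
    hpd.hasFDerivAt.comp_hasDerivAt (0 : ℝ) (hl 0)
  obtain ⟨ha, hb⟩ := second_deriv_normSq h1 h2
  refine ⟨_, ha, ?_⟩
  simpa using hb

/-- `|d|² + ε · barrier` is strictly subharmonic, so it has no interior local maximum. -/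
theorem not_isLocalMax {d : ℂ → ℂ} (hd : IsSol d) {x : ℂ}
    (hx : x ∈ ({x : ℂ | 0 < x.re} \ {1} : Set ℂ)) {ε : ℝ} (hε : 0 < ε) :
    ¬ IsLocalMax (fun z => Complex.normSq (d z) + ε * barrier z) x := by
  intro hmax
  have key : ∀ v : ℂ, Complex.normSq v = 1 → ∀ p : ℂ → ℂ, p = (fun y => fderiv ℝ d y v) →
      2 * (Complex.normSq (p x) +
      ((d x).re * (fderiv ℝ p x v).re + (d x).im * (fderiv ℝ p x v).im)) +
      ε * (2 + 2 / Complex.normSq (x - 1) -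
      (2 * ((x - 1).re * v.re + (x - 1).im * v.im)) ^ 2 / Complex.normSq (x - 1) ^ 2) ≤ 0 := by
    intro v hv p hp
    obtain ⟨g', hg1, hg2⟩ := second_deriv_sol hd hx hp
    obtain ⟨q', hq1, hq2⟩ := second_deriv_barrier hx.2 hv
    refine second_deriv_nonpos (g := fun t : ℝ => Complex.normSq (d (x + t * v)) +
      ε * barrier (x + t * v)) ?_ (hg2.fun_add (hq2.const_mul ε)) ?_
    · filter_upwards [hg1, hq1] with t h1 h2 using h1.fun_add (h2.const_mul ε)
    · have hc : Tendsto (fun t : ℝ => x + t * v) (nhds 0) (nhds x) := by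
        have : ContinuousAt (fun t : ℝ => x + t * v) 0 := by fun_prop
        simpa [ContinuousAt] using this
      have := hc.eventually hmax
      filter_upwards [this] with t ht
      simpa using ht
  have k1 := key 1 (by simp) (pd1 d) rfl
  have k2 := key Complex.I (by simp) (pd2 d) rfl
  have hx0 : Complex.normSq (x - 1) ≠ 0 := by simpa [sub_eq_zero] using hx.2
  have hbar : (2 + 2 / Complex.normSq (x - 1) -
      (2 * ((x - 1).re * (1 : ℂ).re + (x - 1).im * (1 : ℂ).im)) ^ 2 / Complex.normSq (x - 1) ^ 2) +
      (2 + 2 / Complex.normSq (x - 1) - (2 * ((x - 1).re * Complex.I.re +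
      (x - 1).im * Complex.I.im)) ^ 2 / Complex.normSq (x - 1) ^ 2) = 4 := by
    simp only [Complex.one_re, Complex.one_im, Complex.I_re, Complex.I_im, mul_one, mul_zero,
      add_zero, zero_add]
    field_simp
    rw [Complex.normSq_apply]
    ring
  have hm := hd.eq x hx
  have hre := congrArg Complex.re hm
  have him := congrArg Complex.im hm
  simp only [magLap, lapC, Complex.add_re, Complex.add_im, Complex.neg_re, Complex.neg_im,
    Complex.mul_re, Complex.mul_im, Complex.I_re, Complex.I_im, Complex.ofReal_re,
    Complex.ofReal_im, Complex.zero_re, Complex.zero_im, Complex.re_ofNat, Complex.im_ofNat]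
    at hre him
  have hmg : 0 ≤ mgSq 1 d x := by unfold mgSq; positivity
  rw [mgSq, ← Complex.normSq_eq_norm_sq, ← Complex.normSq_eq_norm_sq, Complex.normSq_apply,
    Complex.normSq_apply] at hmg
  simp only [mg1, mg2, Complex.add_re, Complex.add_im, 
    Complex.mul_re, Complex.mul_im, Complex.I_re, Complex.I_im, Complex.ofReal_re,
    Complex.ofReal_im] at hmg
  rw [Complex.normSq_apply] at k1 k2
  change 2 * (_ + ((d x).re * (fderiv ℝ (fun y => pd1 d y) x 1).re +
    (d x).im * (fderiv ℝ (fun y => pd1 d y) x 1).im)) + _ ≤ 0 at k1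
  change 2 * (_ + ((d x).re * (fderiv ℝ (fun y => pd2 d y) x Complex.I).re +
    (d x).im * (fderiv ℝ (fun y => pd2 d y) x Complex.I).im)) + _ ≤ 0 at k2
  generalize (fderiv ℝ (fun y => pd1 d y) x 1) = L1 at *
  generalize (fderiv ℝ (fun y => pd2 d y) x Complex.I) = L2 at *
  generalize 2 + 2 / Complex.normSq (x - 1) -
      (2 * ((x - 1).re * (1 : ℂ).re + (x - 1).im * (1 : ℂ).im)) ^ 2 / Complex.normSq (x - 1) ^ 2
      = q1 at *
  rw [eq_sub_of_add_eq' hbar] at k2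
  -- `Δ|d|² = 2|(i∇+A)d|²`
  have e : 0 ≤ 2 * ((pd1 d x).re * (pd1 d x).re + (pd1 d x).im * (pd1 d x).im + ((d x).re * L1.re +
      (d x).im * L1.im)) + 2 * ((pd2 d x).re * (pd2 d x).re + (pd2 d x).im * (pd2 d x).im +
      ((d x).re * L2.re + (d x).im * L2.im)) := by
    linear_combination 2 * hmg + 2 * (d x).re * hre + 2 * (d x).im * him
  linarith

/-- A solution tending to zero at infinity vanishes. The maximum of `|d|² + ε · barrier` on a
half-disk with a small disk around the pole removed cannot be attained on the boundary, for small
`ε`, if `d` does not vanish, nor in the interior by `not_isLocalMax`. -/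
theorem eq_zero_of_decay {d : ℂ → ℂ} (hd : IsSol d)
    (hK : ∃ K, ∀ z : ℂ, 0 ≤ z.re → Real.exp 2 ≤ ‖z‖ → ‖d z‖ ≤ K / ‖z‖) :
    ∀ z : ℂ, 0 < z.re → d z = 0 := by
  have hcl : closure {x : ℂ | 0 < x.re} = {x : ℂ | 0 ≤ x.re} := Complex.closure_setOfPred_lt_re 0
  -- it suffices to treat points different from the pole, by continuity
  suffices h : ∀ p ∈ ({x : ℂ | 0 < x.re} \ {1} : Set ℂ), d p = 0 by
    intro z hz
    by_cases hz1 : z = 1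
    · have hopen : IsOpen {x : ℂ | 0 < x.re} := isOpen_lt continuous_const Complex.continuous_re
      have hc : ContinuousAt d z := hd.cont.continuousAt
        (mem_of_superset (hopen.mem_nhds hz) subset_closure)
      have h1 : Tendsto d (nhdsWithin z {z}ᶜ) (nhds (d z)) := hc.tendsto.mono_left nhdsWithin_le_nhds
      have h2 : Tendsto d (nhdsWithin z {z}ᶜ) (nhds 0) := by
        refine (tendsto_congr' ?_).2 tendsto_const_nhds
        filter_upwards [self_mem_nhdsWithin, nhdsWithin_le_nhds (hopen.mem_nhds hz)] with y hy1 hy2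
        exact h y ⟨hy2, by simpa [hz1] using hy1⟩
      exact tendsto_nhds_unique h1 h2
    · exact h z ⟨hz, hz1⟩
  intro p hp
  by_contra hne
  have hp0 : 0 < p.re := hp.1
  have hp1 : 0 < ‖p - 1‖ := norm_pos_iff.2 (sub_ne_zero.2 hp.2)
  obtain ⟨K, hK⟩ := hK
  have hpos : 0 < Complex.normSq (d p) := Complex.normSq_pos.2 hne
  set a := Complex.normSq (d p) with ha
  -- a radius beyond which `|d|² ≤ a / 2`
  obtain ⟨R, hR1, hR2⟩ : ∃ R, ‖p‖ < R ∧ ∀ z : ℂ, 0 ≤ z.re → ‖z‖ = R →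
      Complex.normSq (d z) ≤ a / 2 := by
    have ht : Tendsto (fun R : ℝ => (K / R) ^ 2) atTop (nhds 0) := by
      simpa using (tendsto_const_nhds (x := K)).div_atTop tendsto_id |>.pow 2
    obtain ⟨R, h1, h2, h3⟩ := ((ht.eventually (ge_mem_nhds (half_pos hpos))).and
      ((eventually_gt_atTop ‖p‖).and (eventually_ge_atTop (Real.exp 2)))).exists
    refine ⟨R, h2, fun z hz hzR => le_trans ?_ h1⟩
    rw [Complex.normSq_eq_norm_sq, ← hzR]
    exact pow_le_pow_left₀ (norm_nonneg _) (hK z hz (by rw [hzR]; exact h3)) 2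
  have hR0 : 0 ≤ R := (norm_nonneg p).trans hR1.le
  -- an upper bound for the barrier on the half-disk of radius `R`
  let Q : ℝ := 2 * (R + 1) ^ 2
  have hQ : ∀ z : ℂ, ‖z‖ ≤ R → barrier z ≤ Q := by
    intro z hz
    have h1 : Complex.normSq (z - 1) ≤ (R + 1) ^ 2 := by
      rw [Complex.normSq_eq_norm_sq]
      refine pow_le_pow_left₀ (norm_nonneg _) ((norm_sub_le _ _).trans ?_) 2
      simpa using hz
    have h2 := Real.log_le_self (Complex.normSq_nonneg (z - 1))
    simp only [barrier, Q]
    linarith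
  have hQp : 0 ≤ Q - barrier p := sub_nonneg.2 (hQ p hR1.le)
  let ε : ℝ := a / (4 * (Q - barrier p + 1))
  have hε : 0 < ε := by positivity
  have hεp : ε * (Q - barrier p) < a / 2 := by
    have : ε * (Q - barrier p + 1) = a / 4 := by simp only [ε]; field_simp
    nlinarith
  have hcomp : IsCompact ({z : ℂ | 0 ≤ z.re} ∩ Metric.closedBall 0 R) :=
    (isCompact_closedBall _ _).inter_left (isClosed_le continuous_const Complex.continuous_re)
  have hcontS : ContinuousOn (fun z => Complex.normSq (d z)) {z : ℂ | 0 ≤ z.re} :=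
    Complex.continuous_normSq.comp_continuousOn (hcl ▸ hd.cont)
  obtain ⟨M, hM⟩ := (hcomp.bddAbove_image (hcontS.mono inter_subset_left))
  have hM' : ∀ z : ℂ, 0 ≤ z.re → ‖z‖ ≤ R → Complex.normSq (d z) ≤ M := fun z h1 h2 =>
    hM (mem_image_of_mem _ ⟨h1, by simpa using h2⟩)
  have hM0 : 0 ≤ M := (Complex.normSq_nonneg _).trans (hM' p hp0.le hR1.le)
  -- a radius around the pole on which the barrier dominates `|d|²`
  let τ : ℝ := min (‖p - 1‖ / 2) (Real.exp (-(M / ε)) / 2)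
  have hτ : 0 < τ := by positivity
  have hτp : τ < ‖p - 1‖ := (min_le_left _ _).trans_lt (half_lt_self hp1)
  have hτe : τ ≤ Real.exp (-(M / ε)) :=
    (min_le_right _ _).trans (half_le_self (Real.exp_pos _).le)
  have hτ1 : τ ≤ 1 := hτe.trans (Real.exp_le_one_iff.2 (by simpa using by positivity))
  have hτlog : ε * Real.log (τ ^ 2) ≤ -M := by
    have h1 : Real.log τ ≤ -(M / ε) := (Real.log_le_iff_le_exp hτ).2 hτe
    have h2 : ε * Real.log τ ≤ ε * -(M / ε) := mul_le_mul_of_nonneg_left h1 hε.le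
    have h3 : ε * -(M / ε) = -M := by field_simp
    rw [Real.log_pow]
    push_cast
    linarith
  let S : ℂ → ℝ := fun z => Complex.normSq (d z) + ε * barrier z
  let C : Set ℂ := ({z : ℂ | 0 ≤ z.re} ∩ Metric.closedBall 0 R) ∩ {z : ℂ | τ ≤ ‖z - 1‖}
  have hC : IsCompact C := hcomp.inter_right (isClosed_le continuous_const (by fun_prop))
  have hSc : ContinuousOn S C := by
    refine (hcontS.mono fun z hz => hz.1.1).add (continuousOn_const.mul ?_)
    have h1 : Continuous fun z : ℂ => Complex.normSq (z - 1) := by fun_prop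
    refine h1.continuousOn.add (h1.continuousOn.log fun z hz => ?_)
    have : 0 < ‖z - 1‖ := hτ.trans_le hz.2
    exact (Complex.normSq_pos.2 (norm_pos_iff.1 this)).ne'
  obtain ⟨z, hzC, hzmax⟩ := hC.exists_isMaxOn
    ⟨p, ⟨hp0.le, by simpa using hR1.le⟩, hτp.le⟩ hSc
  have hzp : S p ≤ S z := hzmax ⟨⟨hp0.le, by simpa using hR1.le⟩, hτp.le⟩
  have hSz : a / 2 + ε * Q < S z := by
    refine lt_of_lt_of_le ?_ hzp
    simp only [S, ← ha]
    linarith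
  have hz0 : 0 ≤ z.re := hzC.1.1
  have hzR : ‖z‖ ≤ R := by simpa using hzC.1.2
  have hzτ : τ ≤ ‖z - 1‖ := hzC.2
  have hbz : ε * barrier z ≤ ε * Q := mul_le_mul_of_nonneg_left (hQ z hzR) hε.le
  have hz0' : 0 < z.re := by
    refine lt_of_le_of_ne hz0 fun h => ?_
    simp only [S, hd.bdry z h.symm, map_zero] at hSz
    linarith
  have hzR' : ‖z‖ < R := by
    refine lt_of_le_of_ne hzR fun h => ?_
    have := hR2 z hz0 h
    simp only [S] at hSz
    linarith
  have hzτ' : τ < ‖z - 1‖ := by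
    refine lt_of_le_of_ne hzτ fun h => ?_
    have h1 := hM' z hz0 hzR
    simp only [S, barrier, Complex.normSq_eq_norm_sq (z - 1), ← h, mul_add] at hSz
    have h2 : ε * τ ^ 2 ≤ ε * Q := by
      have h3 : τ ^ 2 ≤ 1 := pow_le_one₀ hτ.le hτ1
      have h4 : 1 ≤ Q := by simp only [Q]; nlinarith
      exact mul_le_mul_of_nonneg_left (h3.trans h4) hε.le
    linarith
  refine not_isLocalMax hd (x := z) ⟨hz0', ?_⟩ hε (hzmax.isLocalMax ?_)
  · rintro rfl
    simp at hzτ'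
    linarith
  · refine inter_mem (inter_mem ?_ ?_) ?_
    · exact mem_of_superset ((isOpen_lt continuous_const Complex.continuous_re).mem_nhds hz0')
        fun w (hw : 0 < w.re) => show 0 ≤ w.re from hw.le
    · exact Metric.closedBall_mem_nhds_of_mem (by simpa using hzR')
    · have hc : Continuous fun w : ℂ => ‖w - 1‖ := by fun_prop
      exact mem_of_superset ((isOpen_lt continuous_const hc).mem_nhds hzτ')
        fun w (hw : τ < ‖w - 1‖) => show τ ≤ ‖w - 1‖ from hw.le

/-! ### Uniqueness -/

theorem IsLimitProfile.isSol {ψ : ℂ → ℂ} (h : IsLimitProfile ψ) : IsSol ψ :=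
  ⟨h.1, h.2.1, h.2.2.2.1, h.2.2.2.2.2.1⟩

/-- Only the first growing mode can be present in a limit profile. -/
theorem IsLimitProfile.coefA_eq_zero {ψ : ℂ → ℂ} (h : IsLimitProfile ψ) {m : ℕ} (hm : m ≠ 1) :
    coefA ψ m = 0 := by
  rcases Nat.eq_zero_or_pos m with rfl | hm0
  · exact coefA_zero ψ
  · exact growing_modes_vanish h.isSol h.2.2.2.2.1 h.2.2.2.2.2.2 (by omega)

theorem IsLimitProfile.coefA_one_ne_zero {ψ : ℂ → ℂ} (h : IsLimitProfile ψ) : coefA ψ 1 ≠ 0 := by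
  intro h1
  obtain ⟨x, hx, hne⟩ := h.2.2.1
  refine hne (eq_zero_of_decay h.isSol (decay h.isSol fun m => ?_) x hx)
  by_cases hm : m = 1
  · rw [hm, h1]
  · exact h.coefA_eq_zero hm

/-- Uniqueness of the limit profile up to a multiplicative constant: any two limit
profiles `ψ` and `ψ̃` satisfy `ψ̃ = c·ψ` on `ℝ²₊` for some `c ∈ ℂ`. -/
theorem limit_profile_unique
    (ψ ψt : ℂ → ℂ) (hψ : IsLimitProfile ψ) (hψt : IsLimitProfile ψt) :
    ∃ c : ℂ, ∀ x : ℂ, 0 < x.re → ψt x = c * ψ x := by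
  have h1 := hψ.coefA_one_ne_zero
  -- the constant for which the first growing mode of `ψt - c ψ` cancels
  let c : ℂ := coefA ψt 1 / coefA ψ 1
  have hd := hψ.isSol.sub_smul hψt.isSol c
  refine ⟨c, fun x hx => sub_eq_zero.1 (eq_zero_of_decay hd (decay hd fun m => ?_) x hx)⟩
  rw [coefA_sub_smul hψ.isSol hψt.isSol]
  by_cases hm : m = 1
  · rw [hm, div_mul_cancel₀ _ h1, sub_self]
  · rw [hψ.coefA_eq_zero hm, hψt.coefA_eq_zero hm, mul_zero, sub_zero]

end
end

section
/- Let a = (a₁,a₂) with 0 < a₁ < r, and let u : D̄_r⁺(π(a)) → ℂ be continuous, vanish on {x₁ = 0}, be C¹ on D_r⁺(π(a))∖{a}, and satisfy ∫_{D_r⁺(π(a))} |(i∇+A_a)u|² dx < ∞. Then (1/r²)·∫_{D_r⁺(π(a))} |u|² dx ≤ (1/r)·∫_{∂D_r⁺(π(a))} |u|² dσ + ∫_{D_r⁺(π(a))} |(i∇+A_a)u|² dx. -/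
/-!
Write `c = π(a)` and use polar coordinates `x = c + ρ e^{iθ}`, `0 < ρ < r`, `|θ| < π/2`. Since `a`
lies on the ray `θ = 0`, the function `u` is `C¹` along every other open ray. The potential is
real, so it drops out of `∂_ρ |u|² = 2 Re (ū ∂_ρ u)`, which gives the diamagnetic-type bound
`|∂_ρ |u|²| ≤ 2 |u| |(i∇+A_a)u|`. By the arithmetic-geometric mean inequality

  `∂_ρ (ρ² |u|²) ≥ ρ |u|² - r² ρ |(i∇+A_a)u|²`   (`radial_bound`).

Integrating over `0 < ρ < r` (`ray_inequality`) and then over `θ`, and returning to Cartesian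
coordinates (`halfDisk_polar`), gives
`∫ |u|² ≤ r ∫_{∂D⁺} |u|² dσ + r² ∫ |(i∇+A_a)u|²`, which is the claim after division by `r²`.
Only a one-sided bound on the radial derivative is used, so the integrability of that derivative
is never needed; that of `|(i∇+A_a)u|²` along almost every ray comes from Fubini's theorem.
-/

open MeasureTheory Real Filter Set Asymptotics

noncomputable section

/-- The parameter rectangle of polar coordinates `(ρ, θ)` on a half-disk centred on the axis. -/
def polarRect (r : ℝ) : Set (ℝ × ℝ) := Ioo 0 r ×ˢ Ioo (-(π / 2)) (π / 2)

lemma circleMap_eq_polarCoord_symm (c : ℂ) (p : ℝ × ℝ) :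
    circleMap c p.1 p.2 = c + Complex.polarCoord.symm p := by
  simp [circleMap, Complex.exp_mul_I]

lemma circleMap_mem_halfDisk_iff {c : ℂ} (hc : c.re = 0) {r : ℝ} {p : ℝ × ℝ}
    (hp : p ∈ Complex.polarCoord.target) :
    circleMap c p.1 p.2 ∈ halfDisk c r ↔ p ∈ polarRect r := by
  rw [Complex.polarCoord_target] at hp
  obtain ⟨h1, h2, h3⟩ := hp
  have h1' : 0 < p.1 := h1
  have hre : (circleMap c p.1 p.2).re = p.1 * Real.cos p.2 := by
    simp [circleMap_eq_polarCoord_symm, hc, -Complex.ofReal_cos, -Complex.ofReal_sin]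
  have hd : dist (circleMap c p.1 p.2) c = p.1 := by
    rw [dist_eq_norm]; simp [circleMap, abs_of_pos h1']
  have hcos : 0 < Real.cos p.2 ↔ p.2 ∈ Ioo (-(π / 2)) (π / 2) := by
    constructor
    · intro h
      constructor
      · by_contra! hh
        have := Real.cos_nonpos_of_pi_div_two_le_of_le (x := -p.2) (by linarith) (by linarith)
        rw [Real.cos_neg] at this
        linarith
      · by_contra! hh
        have := Real.cos_nonpos_of_pi_div_two_le_of_le hh (by linarith)
        linarith
    · exact Real.cos_pos_of_mem_Ioo
  simp only [halfDisk, polarRect, mem_ofPred_eq, hre, hd, mem_prod, ← hcos, mem_Ioo, h1', true_and,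
    mul_pos_iff_of_pos_left]

lemma polarRect_subset_target (r : ℝ) : polarRect r ⊆ Complex.polarCoord.target := by
  rw [Complex.polarCoord_target]
  rintro p ⟨⟨h1, -⟩, h2, h3⟩
  exact ⟨h1, by linarith [Real.pi_pos], by linarith [Real.pi_pos]⟩

lemma measurableSet_polarRect (r : ℝ) : MeasurableSet (polarRect r) :=
  measurableSet_Ioo.prod measurableSet_Ioo

lemma isOpen_halfDisk (c : ℂ) (r : ℝ) : IsOpen (halfDisk c r) :=
  (isOpen_lt (continuous_id.dist continuous_const) continuous_const).inter
    (isOpen_lt continuous_const Complex.continuous_re)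

/-- Change to polar coordinates on a half-disk centred on the axis `{x₁ = 0}`: integrability is
preserved and the integrals agree. -/
lemma halfDisk_polar {c : ℂ} (hc : c.re = 0) {r : ℝ} {f : ℂ → ℝ}
    (hf : IntegrableOn f (halfDisk c r)) :
    IntegrableOn (fun p : ℝ × ℝ => p.1 * f (circleMap c p.1 p.2)) (polarRect r) ∧
      ∫ p in polarRect r, p.1 * f (circleMap c p.1 p.2) = ∫ x in halfDisk c r, f x := by
  have hm : MeasurableSet (halfDisk c r) := (isOpen_halfDisk c r).measurableSet
  set F : ℂ → ℝ := fun z => (halfDisk c r).indicator f (c + z) with hF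
  have hFint : Integrable F := (hf.integrable_indicator hm).comp_add_left c
  have hkey : ∀ p ∈ Complex.polarCoord.target, p.1 * F (Complex.polarCoord.symm p) =
      (polarRect r).indicator (fun p : ℝ × ℝ => p.1 * f (circleMap c p.1 p.2)) p := by
    intro p hp
    have := circleMap_mem_halfDisk_iff hc (r := r) hp
    simp only [hF, ← circleMap_eq_polarCoord_symm]
    by_cases h : p ∈ polarRect r
    · rw [indicator_of_mem h, indicator_of_mem (this.2 h)]
    · rw [indicator_of_notMem h, indicator_of_notMem (fun h' => h (this.1 h')), mul_zero]
  have hmt : MeasurableSet Complex.polarCoord.target :=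
    Complex.polarCoord.open_target.measurableSet
  constructor
  · have h1 : Integrable (F ∘ Complex.measurableEquivRealProd.symm) :=
      (Complex.volume_preserving_equiv_real_prod.symm.integrable_comp_emb
        Complex.measurableEquivRealProd.symm.measurableEmbedding).2 hFint
    have h2 := (integrableOn_image_iff_integrableOn_abs_det_fderiv_smul volume
      polarCoord.open_target.measurableSet
      (fun p _ => (hasFDerivAt_polarCoord_symm p).hasFDerivWithinAt)
      polarCoord.symm.injOn (F ∘ Complex.measurableEquivRealProd.symm)).1 h1.integrableOn
    have h3 := h2.mono_set (polarRect_subset_target r)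
    refine h3.congr_fun (fun p hp => ?_) (measurableSet_polarRect r)
    have h4 := hkey p (polarRect_subset_target r hp)
    rw [indicator_of_mem hp] at h4
    simp only [det_fderivPolarCoordSymm, Function.comp, smul_eq_mul, abs_of_pos hp.1.1]
    rw [← h4, Complex.measurableEquivRealProd_symm_polarCoord_symm_apply]
  · have h1 := Complex.integral_comp_polarCoord_symm F
    have h2 : ∫ z, F z = ∫ x in halfDisk c r, f x := by
      rw [← integral_indicator hm]
      exact integral_add_left_eq_self (fun z => (halfDisk c r).indicator f z) c
    rw [← h2, ← h1]
    change _ = ∫ p in Complex.polarCoord.target, p.1 * F (Complex.polarCoord.symm p)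
    rw [setIntegral_congr_fun (g := (polarRect r).indicator
        (fun p : ℝ × ℝ => p.1 * f (circleMap c p.1 p.2))) hmt hkey,
      setIntegral_indicator (measurableSet_polarRect r),
      inter_eq_right.2 (polarRect_subset_target r)]

lemma circleMap_mem_closure {c : ℂ} (hc : c.re = 0) {r : ℝ} (hr : 0 < r) {ρ θ : ℝ}
    (hρ : ρ ∈ Icc 0 r) (hθ : θ ∈ Icc (-(π / 2)) (π / 2)) :
    circleMap c ρ θ ∈ closure (halfDisk c r) := by
  have h : MapsTo (fun p : ℝ × ℝ => circleMap c p.1 p.2) (polarRect r) (halfDisk c r) :=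
    fun p hp => (circleMap_mem_halfDisk_iff hc (polarRect_subset_target r hp)).2 hp
  have h2 := h.closure (by unfold circleMap; fun_prop)
  have h3 : (ρ, θ) ∈ closure (polarRect r) := by
    rw [polarRect, closure_prod_eq, closure_Ioo hr.ne,
      closure_Ioo (by linarith [Real.pi_pos])]
    exact ⟨hρ, hθ⟩
  exact h2 h3

/-- The pointwise lower bound for `∂_ρ (ρ² |u|²)` at distance `ρ` from the centre: `w` is the value
of `u`, `s, t` are the components of the unit radial vector, `p, q` the partial derivatives of `u`,
and `A, B` the components of a real potential. -/
lemma radial_bound {ρ r s t A B : ℝ} (hρ : 0 < ρ) (hρr : ρ < r) (hst : s ^ 2 + t ^ 2 = 1)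
    (w p q : ℂ) :
    ρ * ‖w‖ ^ 2 -
        r ^ 2 * (ρ * (‖Complex.I * p + A * w‖ ^ 2 + ‖Complex.I * q + B * w‖ ^ 2)) ≤
      2 * ρ * ‖w‖ ^ 2 + ρ ^ 2 * (2 * inner ℝ w (s * p + t * q)) := by
  set m := Complex.I * p + A * w with hm
  set n := Complex.I * q + B * w with hn
  -- The potential contributes `i (sA + tB) w` to `s p + t q`, which is orthogonal to `w`.
  have h1 : inner ℝ w (s * p + t * q) = inner ℝ (Complex.I * w) (s * m + t * n) := by
    simp only [Complex.inner, hm, hn]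
    simp
    ring
  have h2 : -(‖w‖ * ‖s * m + t * n‖) ≤ inner ℝ (Complex.I * w) (s * m + t * n) := by
    have := abs_real_inner_le_norm (Complex.I * w) (s * m + t * n)
    rw [norm_mul, Complex.norm_I, one_mul] at this
    exact (abs_le.1 this).1
  have h3 : ‖s * m + t * n‖ ^ 2 ≤ ‖m‖ ^ 2 + ‖n‖ ^ 2 := by
    have h4 : ‖s * m + t * n‖ ≤ |s| * ‖m‖ + |t| * ‖n‖ := by
      refine (norm_add_le _ _).trans ?_
      simp
    have h5 : |s| ^ 2 + |t| ^ 2 = 1 := by simpa using hst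
    calc ‖s * m + t * n‖ ^ 2 ≤ (|s| * ‖m‖ + |t| * ‖n‖) ^ 2 := by gcongr
      _ ≤ (|s| ^ 2 + |t| ^ 2) * (‖m‖ ^ 2 + ‖n‖ ^ 2) := by
        nlinarith [sq_nonneg (|s| * ‖n‖ - |t| * ‖m‖)]
      _ = _ := by rw [h5, one_mul]
  rw [h1]
  set k := ‖s * m + t * n‖ with hk
  set M := ‖m‖ ^ 2 + ‖n‖ ^ 2 with hM
  have hM0 : 0 ≤ M := by positivity
  have h6 : ρ ^ 2 * k ^ 2 ≤ r ^ 2 * M := by gcongr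
  have h7 : 0 ≤ ρ * (‖w‖ - ρ * k) ^ 2 := by positivity
  have h8 := mul_le_mul_of_nonneg_left h2 (by positivity : 0 ≤ 2 * ρ ^ 2)
  have h9 := mul_le_mul_of_nonneg_left h6 hρ.le
  nlinarith

/-- The inequality along a single ray not containing the pole `a`. -/
lemma ray_inequality {a c : ℂ} {r θ : ℝ} (hc : c.re = 0) (hr : 0 < r) {u : ℂ → ℂ}
    (hcont : ContinuousOn u (closure (halfDisk c r)))
    (hC1 : ContDiffOn ℝ 1 u (halfDisk c r \ {a}))
    (hθ : θ ∈ Ioo (-(π / 2)) (π / 2)) (hθa : ∀ ρ ∈ Ioo 0 r, circleMap c ρ θ ≠ a)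
    (hi1 : IntegrableOn (fun ρ => ρ * ‖u (circleMap c ρ θ)‖ ^ 2) (Ioo 0 r))
    (hi2 : IntegrableOn (fun ρ => ρ * mgSq a u (circleMap c ρ θ)) (Ioo 0 r)) :
    ∫ ρ in Ioo 0 r, ρ * ‖u (circleMap c ρ θ)‖ ^ 2 ≤
      r ^ 2 * ‖u (circleMap c r θ)‖ ^ 2 +
        r ^ 2 * ∫ ρ in Ioo 0 r, ρ * mgSq a u (circleMap c ρ θ) := by
  have hi3 := hi2.const_mul (r ^ 2)
  set e : ℂ := (Real.cos θ : ℂ) + Real.sin θ * Complex.I with he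
  have hline : ∀ ρ : ℝ, circleMap c ρ θ = c + ρ * e := fun ρ => by
    simp [circleMap, Complex.exp_mul_I, he]
  have hmem : ∀ ρ ∈ Ioo 0 r, circleMap c ρ θ ∈ halfDisk c r \ {a} := fun ρ hρ =>
    ⟨(circleMap_mem_halfDisk_iff hc (p := (ρ, θ))
      (polarRect_subset_target r ⟨hρ, hθ⟩)).2 ⟨hρ, hθ⟩, hθa ρ hρ⟩
  have hopen : IsOpen (halfDisk c r \ {a}) := (isOpen_halfDisk c r).sdiff isClosed_singleton
  have hderiv : ∀ ρ ∈ Ioo 0 r,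
      HasDerivAt (fun ρ : ℝ => ρ ^ 2 * ‖u (circleMap c ρ θ)‖ ^ 2)
        (2 * ρ * ‖u (circleMap c ρ θ)‖ ^ 2 + ρ ^ 2 * (2 * inner ℝ (u (circleMap c ρ θ))
          ((Real.cos θ : ℂ) * pd1 u (circleMap c ρ θ) +
            (Real.sin θ : ℂ) * pd2 u (circleMap c ρ θ)))) ρ := by
    intro ρ hρ
    have hd : DifferentiableAt ℝ u (circleMap c ρ θ) :=
      (hC1.differentiableOn one_ne_zero).differentiableAt (hopen.mem_nhds (hmem ρ hρ))
    have hl : HasDerivAt (fun ρ : ℝ => circleMap c ρ θ) e ρ := by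
      simp only [hline]
      simpa using ((Complex.ofRealCLM.hasDerivAt (x := ρ)).mul_const e).const_add c
    have hu := (hd.hasFDerivAt.comp_hasDerivAt ρ hl)
    have heq : fderiv ℝ u (circleMap c ρ θ) e = (Real.cos θ : ℂ) * pd1 u (circleMap c ρ θ) +
            (Real.sin θ : ℂ) * pd2 u (circleMap c ρ θ) := by
      have : e = (Real.cos θ) • (1 : ℂ) + (Real.sin θ) • Complex.I := by simp [he]
      rw [this, map_add, map_smul, map_smul, Complex.real_smul, Complex.real_smul]
      rfl
    rw [heq] at hu
    refine ((hasDerivAt_pow 2 ρ).mul hu.norm_sq).congr_deriv ?_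
    rw [Nat.cast_ofNat, pow_one]
    rfl
  have hFc : ContinuousOn (fun ρ : ℝ => ρ ^ 2 * ‖u (circleMap c ρ θ)‖ ^ 2) (Icc 0 r) := by
    have h1 : ContinuousOn (fun ρ : ℝ => u (circleMap c ρ θ)) (Icc 0 r) :=
      hcont.comp (by unfold circleMap; fun_prop)
        (fun ρ hρ => circleMap_mem_closure hc hr hρ (Ioo_subset_Icc_self hθ))
    exact (continuousOn_id.pow 2).mul (h1.norm.pow 2)
  have hmain := intervalIntegral.integral_le_sub_of_hasDeriv_right_of_le hr.le hFc
    (fun ρ hρ => (hderiv ρ hρ).hasDerivWithinAt)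
    ((integrableOn_Icc_iff_integrableOn_Ioo).2 (hi1.sub hi3))
    (fun ρ hρ => radial_bound hρ.1 hρ.2 (Real.cos_sq_add_sin_sq θ) _ _ _)
  rw [intervalIntegral.integral_of_le hr.le, integral_Ioc_eq_integral_Ioo] at hmain
  have hsub : ∫ ρ in Ioo 0 r, (ρ * ‖u (circleMap c ρ θ)‖ ^ 2 -
      r ^ 2 * (ρ * mgSq a u (circleMap c ρ θ))) = (∫ ρ in Ioo 0 r, ρ * ‖u (circleMap c ρ θ)‖ ^ 2) -
        r ^ 2 * ∫ ρ in Ioo 0 r, ρ * mgSq a u (circleMap c ρ θ) := by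
    rw [integral_sub hi1 hi3, integral_const_mul]
  have hmain' : ∫ ρ in Ioo 0 r, (ρ * ‖u (circleMap c ρ θ)‖ ^ 2 -
      r ^ 2 * (ρ * mgSq a u (circleMap c ρ θ))) ≤ r ^ 2 * ‖u (circleMap c r θ)‖ ^ 2 := by
    simpa using hmain
  linarith

/-- Poincaré inequality for the magnetic gradient on the half-disk `D_r⁺(π(a))`, for
functions vanishing on the diameter `{x₁ = 0}`:
`(1/r²)∫ |u|² dx ≤ (1/r)∫_{∂D_r⁺} |u|² dσ + ∫ |(i∇+A_a)u|² dx`. -/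
theorem poincare_halfDisk_magnetic
    (a : ℂ) (r : ℝ) (ha : 0 < a.re) (har : a.re < r) (u : ℂ → ℂ)
    (hcont : ContinuousOn u (closure (halfDisk (proj a) r)))
    (hbc : ∀ x ∈ closure (halfDisk (proj a) r), x.re = 0 → u x = 0)
    (hC1 : ContDiffOn ℝ 1 u (halfDisk (proj a) r \ {a}))
    (hint : IntegrableOn (mgSq a u) (halfDisk (proj a) r)) :
    (1 / r ^ 2) * ∫ x in halfDisk (proj a) r, ‖u x‖ ^ 2 ≤
      (1 / r) * bdryInt (proj a) r (fun x => ‖u x‖ ^ 2) +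
        ∫ x in halfDisk (proj a) r, mgSq a u x := by
  have hr : 0 < r := ha.trans har
  set c := proj a with hcdef
  have hc : c.re = 0 := by simp [hcdef, proj]
  have hcim : c.im = a.im := by simp [hcdef, proj]
  have hcompact : IsCompact (closure (halfDisk c r)) :=
    (Metric.isBounded_ball.subset (fun x hx => hx.1 : halfDisk c r ⊆ Metric.ball c r)
      ).isCompact_closure
  have hu2 : IntegrableOn (fun x => ‖u x‖ ^ 2) (halfDisk c r) :=
    ((hcont.norm.pow 2).integrableOn_compact hcompact).mono_set subset_closure
  obtain ⟨hI1, hE1⟩ := halfDisk_polar hc hu2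
  obtain ⟨hI2, hE2⟩ := halfDisk_polar hc hint
  rw [← hE1, ← hE2]
  simp only [polarRect, IntegrableOn, Measure.volume_eq_prod, ← Measure.prod_restrict]
    at hI1 hI2 ⊢
  rw [integral_prod_symm _ hI1, integral_prod_symm _ hI2]
  have hb : IntegrableOn (fun θ : ℝ => ‖u (circleMap c r θ)‖ ^ 2) (Ioo (-(π / 2)) (π / 2)) := by
    have h1 : ContinuousOn (fun θ : ℝ => u (circleMap c r θ)) (Icc (-(π / 2)) (π / 2)) :=
      hcont.comp (by fun_prop)
        (fun θ hθ => circleMap_mem_closure hc hr (right_mem_Icc.2 hr.le) hθ)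
    exact ((h1.norm.pow 2).integrableOn_compact isCompact_Icc).mono_set Ioo_subset_Icc_self
  -- The ray `θ = 0` passes through `a` and is discarded as a null set of angles.
  have hne : ∀ᵐ θ : ℝ ∂(volume.restrict (Ioo (-(π / 2)) (π / 2))), θ ≠ 0 :=
    ae_restrict_of_ae (Measure.ae_ne volume 0)
  have hle : (∫ θ in Ioo (-(π / 2)) (π / 2), ∫ ρ in Ioo 0 r, ρ * ‖u (circleMap c ρ θ)‖ ^ 2) ≤
      ∫ θ in Ioo (-(π / 2)) (π / 2), (r ^ 2 * ‖u (circleMap c r θ)‖ ^ 2 +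
        r ^ 2 * ∫ ρ in Ioo 0 r, ρ * mgSq a u (circleMap c ρ θ)) := by
    refine integral_mono_ae hI1.integral_prod_right
      ((hb.const_mul _).add (hI2.integral_prod_right.const_mul _)) ?_
    filter_upwards [hI1.prod_left_ae, hI2.prod_left_ae, hne,
      ae_restrict_mem measurableSet_Ioo] with θ h1 h2 h0 hθ
    refine ray_inequality hc hr hcont hC1 hθ (fun ρ hρ heq => ?_) h1 h2
    have him : ρ * Real.sin θ = 0 := by
      have := congrArg Complex.im heq
      rw [circleMap_eq_polarCoord_symm c (ρ, θ)] at this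
      simpa [hcim, -Complex.ofReal_cos, -Complex.ofReal_sin] using this
    rcases mul_eq_zero.1 him with h | h
    · exact hρ.1.ne' h
    · exact h0 ((Real.sin_eq_zero_iff_of_lt_of_lt (by linarith [hθ.1, Real.pi_pos])
        (by linarith [hθ.2, Real.pi_pos])).1 h)
  rw [integral_add (hb.const_mul _) (hI2.integral_prod_right.const_mul _), integral_const_mul,
    integral_const_mul, ← mul_add] at hle
  have hbd : (1 / r) * bdryInt c r (fun x => ‖u x‖ ^ 2) =
      ∫ θ in Ioo (-(π / 2)) (π / 2), ‖u (circleMap c r θ)‖ ^ 2 := by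
    rw [bdryInt, integral_const_mul, ← mul_assoc, one_div, inv_mul_cancel₀ hr.ne', one_mul]
  rw [hbd, one_div, inv_mul_le_iff₀ (by positivity)]
  exact hle

end
end
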